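/- Suppose there exist θ^L < θ^H in (0,1) such that, wherever u'' exists, u''(θ) < 0 for θ ∈ [0,θ^L), u''(θ) > 0 for θ ∈ (θ^L,θ^H), and u''(θ) < 0 for θ ∈ (θ^H,1]. Suppose there is no pair θ_*^L < θ_*^H in (θ^L,θ^H) satisfying the two tangency conditions u(m^L) + u'(m^L)·(θ_*^L − m^L) = u(θ_*^L) and u(m^H) + u'(m^H)·(θ_*^H − m^H) = u(θ_*^H) with m^L = E_F[θ|(0,θ_*^L)], m^H = E_F[θ|(θ_*^H,1)]. If there exists θ_*^M ∈ (0,1) such that u(m^L) + u'(m^L)·(θ_*^M − m^L) = u(m^H) + u'(m^H)·(θ_*^M − m^H) and u(m^L)·F(θ_*^M) + u(m^H)·(1 − F(θ_*^M)) ≥ u(E_F[θ]), where m^L = E_F[θ|(0,θ_*^M)] and m^H = E_F[θ|(θ_*^M,1)], then there exists such a θ_*^M for which the open pooling set P_* = [0,θ_*^M) ∪ (θ_*^M,1] is optimal for u; moreover for this θ_*^M one has m^L ∈ (0,θ^L) and m^H ∈ (θ^H,1). -/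

import Mathlib

open MeasureTheory Set
open scoped Classical

noncomputable section

/-- CDF associated with the density `f` (relevant on `[0,1]`): `F(x) = ∫_0^x f`. -/
def cdfF (f : ℝ → ℝ) (x : ℝ) : ℝ := ∫ t in (0:ℝ)..x, f t

/-- Conditional mean `E_F[θ | (ξ,ζ)]` of `θ` on the interval `(ξ, ζ)` under density `f`. -/
def condMean (f : ℝ → ℝ) (ξ ζ : ℝ) : ℝ :=
  (∫ t in ξ..ζ, t * f t) / (∫ t in ξ..ζ, f t)

/-- `f` is a strictly positive density of a probability measure on `[0,1]`. -/
def IsDensity (f : ℝ → ℝ) : Prop :=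
  (∀ θ ∈ Icc (0:ℝ) 1, 0 < f θ) ∧ IntegrableOn f (Icc (0:ℝ) 1) ∧
    (∫ t in (0:ℝ)..1, f t) = 1

/-- An open pooling set: a relatively open subset of `[0,1]`. -/
def IsPoolingSet (P : Set ℝ) : Prop :=
  ∃ U : Set ℝ, IsOpen U ∧ P = U ∩ Icc (0:ℝ) 1

/-- Left endpoint `ξ_i` of the interval component of `θ` in `P`. -/
def compInf (P : Set ℝ) (θ : ℝ) : ℝ := sInf (connectedComponentIn P θ)

/-- Right endpoint `ζ_i` of the interval component of `θ` in `P`. -/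
def compSup (P : Set ℝ) (θ : ℝ) : ℝ := sSup (connectedComponentIn P θ)

/-- The posterior-mean map induced by the pooling set `P`: states in a pooled
interval are mapped to the conditional mean of that interval, other states to
themselves. -/
def poolMean (f : ℝ → ℝ) (P : Set ℝ) (θ : ℝ) : ℝ :=
  if θ ∈ P then condMean f (compInf P θ) (compSup P θ) else θ

/-- The induced distribution `G_P` of posterior means. -/
def Gp (f : ℝ → ℝ) (P : Set ℝ) (θ : ℝ) : ℝ :=
  if θ ∈ P then
    (if θ < condMean f (compInf P θ) (compSup P θ) then cdfF f (compInf P θ)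
     else cdfF f (compSup P θ))
  else cdfF f θ

/-- `Γ_P(θ) = ∫_0^θ G_P(t) dt`. -/
def Gam (f : ℝ → ℝ) (P : Set ℝ) (θ : ℝ) : ℝ := ∫ t in (0:ℝ)..θ, Gp f P t

/-- The value `∫_0^1 u(θ) dG_P(θ)` of the pooling set `P` under payoff `u`,
written as the expectation of `u` composed with the posterior-mean map. -/
def poolValue (f : ℝ → ℝ) (u : ℝ → ℝ) (P : Set ℝ) : ℝ :=
  ∫ θ in (0:ℝ)..1, u (poolMean f P θ) * f θ

/-- `P` is an optimal pooling set for `u`. -/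
def IsOptimal (f : ℝ → ℝ) (u : ℝ → ℝ) (P : Set ℝ) : Prop :=
  IsPoolingSet P ∧ ∀ Q : Set ℝ, IsPoolingSet Q → poolValue f u Q ≤ poolValue f u P

/-- `u` is continuously differentiable on `[0,1]` with derivative `u'`, and `u'`
is absolutely continuous with integrable a.e. derivative `u''` (encoded via the
fundamental theorem of calculus). -/
def C1AC (u u' u'' : ℝ → ℝ) : Prop :=
  (∀ θ ∈ Icc (0:ℝ) 1, HasDerivAt u (u' θ) θ) ∧
  ContinuousOn u' (Icc (0:ℝ) 1) ∧
  IntegrableOn u'' (Icc (0:ℝ) 1) ∧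
  (∀ θ ∈ Icc (0:ℝ) 1, u' θ = u' 0 + ∫ t in (0:ℝ)..θ, u'' t)



open Filter Topology

/-- Value contributed by pooling `(x,y)`. -/
def pool (f u : ℝ → ℝ) (x y : ℝ) : ℝ := (∫ t in x..y, f t) * u (condMean f x y)

/-- Working hypotheses. -/
structure Hyp (f u u' : ℝ → ℝ) (θL θH : ℝ) : Prop where
  fpos : ∀ θ ∈ Icc (0:ℝ) 1, 0 < f θ
  fint : IntegrableOn f (Icc (0:ℝ) 1)
  fone : (∫ t in (0:ℝ)..1, f t) = 1
  du : ∀ θ ∈ Icc (0:ℝ) 1, HasDerivAt u (u' θ) θ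
  L0 : 0 < θL
  LH : θL < θH
  H1 : θH < 1
  anti1 : StrictAntiOn u' (Icc 0 θL)
  mono : StrictMonoOn u' (Icc θL θH)
  anti2 : StrictAntiOn u' (Icc θH 1)

theorem refl_int (g : ℝ → ℝ) (x y : ℝ) :
    (∫ t in x..y, g (1 - t)) = ∫ t in (1 - y)..(1 - x), g t := by
  simp [intervalIntegral.integral_comp_sub_left]

section
variable {f u u' : ℝ → ℝ} {θL θH : ℝ}

theorem Hyp.ii (h : Hyp f u u' θL θH) {x y : ℝ} (hx : x ∈ Icc (0:ℝ) 1) (hy : y ∈ Icc (0:ℝ) 1) :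
    IntervalIntegrable f volume x y := by
  have : IntervalIntegrable f volume 0 1 := by
    rw [intervalIntegrable_iff_integrableOn_Icc_of_le zero_le_one]; exact h.fint
  apply this.mono_set
  rw [uIcc_of_le (zero_le_one' ℝ)]
  exact uIcc_subset_Icc hx hy

theorem Hyp.iig (h : Hyp f u u' θL θH) {g : ℝ → ℝ} (hg : ContinuousOn g (Icc 0 1))
    {x y : ℝ} (hx : x ∈ Icc (0:ℝ) 1) (hy : y ∈ Icc (0:ℝ) 1) :
    IntervalIntegrable (fun t => g t * f t) volume x y := by
  apply (h.ii hx hy).continuousOn_mul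
  exact hg.mono (uIcc_subset_Icc hx hy)

theorem Hyp.ucont (h : Hyp f u u' θL θH) : ContinuousOn u (Icc 0 1) := fun x hx =>
  (h.du x hx).continuousAt.continuousWithinAt

theorem Hyp.iit (h : Hyp f u u' θL θH) {x y : ℝ} (hx : x ∈ Icc (0:ℝ) 1) (hy : y ∈ Icc (0:ℝ) 1) :
    IntervalIntegrable (fun t => t * f t) volume x y :=
  h.iig (g := fun t => t) continuousOn_id hx hy

theorem Hyp.iiu (h : Hyp f u u' θL θH) {x y : ℝ} (hx : x ∈ Icc (0:ℝ) 1) (hy : y ∈ Icc (0:ℝ) 1) :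
    IntervalIntegrable (fun t => u t * f t) volume x y :=
  h.iig h.ucont hx hy

theorem Hyp.mass_pos (h : Hyp f u u' θL θH) {x y : ℝ} (hx : 0 ≤ x) (hxy : x < y) (hy : y ≤ 1) :
    0 < ∫ t in x..y, f t := by
  apply intervalIntegral.intervalIntegral_pos_of_pos_on _ _ hxy
  · exact h.ii ⟨hx, by linarith⟩ ⟨by linarith, hy⟩
  · intro t ht; exact h.fpos t ⟨by linarith [ht.1], by linarith [ht.2]⟩

theorem Hyp.mass_ne (h : Hyp f u u' θL θH) {x y : ℝ} (hx : x ∈ Icc (0:ℝ) 1) (hy : y ∈ Icc (0:ℝ) 1)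
    (hxy : x ≠ y) : (∫ t in x..y, f t) ≠ 0 := by
  rcases lt_or_gt_of_ne hxy with h1 | h1
  · exact (h.mass_pos hx.1 h1 hy.2).ne'
  · rw [intervalIntegral.integral_symm]
    exact neg_ne_zero.2 (h.mass_pos hy.1 h1 hx.2).ne'

theorem condMean_symm (x y : ℝ) : condMean f x y = condMean f y x := by
  unfold condMean
  rw [intervalIntegral.integral_symm, intervalIntegral.integral_symm y x, neg_div_neg_eq]

theorem pool_symm (x y : ℝ) : pool f u x y = - pool f u y x := by
  unfold pool
  rw [condMean_symm, intervalIntegral.integral_symm]; ring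

theorem pool_self (x : ℝ) : pool f u x x = 0 := by
  simp [pool]

theorem Hyp.mass_mul (h : Hyp f u u' θL θH) {x y : ℝ} (hx : x ∈ Icc (0:ℝ) 1) (hy : y ∈ Icc (0:ℝ) 1) :
    (∫ t in x..y, f t) * condMean f x y = ∫ t in x..y, t * f t := by
  by_cases hxy : x = y
  · subst hxy; simp
  · unfold condMean
    field_simp [h.mass_ne hx hy hxy]

theorem Hyp.cm_mem (h : Hyp f u u' θL θH) {x y : ℝ} (hx : 0 ≤ x) (hxy : x < y) (hy : y ≤ 1) :
    condMean f x y ∈ Ioo x y := by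
  have hX : x ∈ Icc (0:ℝ) 1 := ⟨hx, by linarith⟩
  have hY : y ∈ Icc (0:ℝ) 1 := ⟨by linarith, hy⟩
  have hP := h.mass_pos hx hxy hy
  have h1 : 0 < ∫ t in x..y, (t * f t - x * f t) := by
    apply intervalIntegral.intervalIntegral_pos_of_pos_on _ _ hxy
    · exact (h.iit hX hY).sub ((h.ii hX hY).const_mul x)
    · intro t ht
      have := h.fpos t ⟨by linarith [ht.1], by linarith [ht.2]⟩
      nlinarith [ht.1]
  have h2 : 0 < ∫ t in x..y, (y * f t - t * f t) := by
    apply intervalIntegral.intervalIntegral_pos_of_pos_on _ _ hxy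
    · exact ((h.ii hX hY).const_mul y).sub (h.iit hX hY)
    · intro t ht
      have := h.fpos t ⟨by linarith [ht.1], by linarith [ht.2]⟩
      nlinarith [ht.2]
  rw [intervalIntegral.integral_sub (h.iit hX hY) ((h.ii hX hY).const_mul x),
    intervalIntegral.integral_const_mul] at h1
  rw [intervalIntegral.integral_sub ((h.ii hX hY).const_mul y) (h.iit hX hY),
    intervalIntegral.integral_const_mul] at h2
  unfold condMean
  constructor
  · rw [lt_div_iff₀ hP]; linarith
  · rw [div_lt_iff₀ hP]; linarith

theorem Hyp.cm_mem01 (h : Hyp f u u' θL θH) {x y : ℝ} (hx : x ∈ Icc (0:ℝ) 1) (hy : y ∈ Icc (0:ℝ) 1) :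
    condMean f x y ∈ Icc (0:ℝ) 1 := by
  rcases lt_trichotomy x y with h1 | h1 | h1
  · have := h.cm_mem hx.1 h1 hy.2
    exact ⟨by linarith [this.1, hx.1], by linarith [this.2, hy.2]⟩
  · subst h1; simp [condMean]
  · rw [condMean_symm]
    have := h.cm_mem hy.1 h1 hx.2
    exact ⟨by linarith [this.1, hy.1], by linarith [this.2, hx.2]⟩

theorem Hyp.mass_add (h : Hyp f u u' θL θH) {x y z : ℝ} (hx : x ∈ Icc (0:ℝ) 1)
    (hy : y ∈ Icc (0:ℝ) 1) (hz : z ∈ Icc (0:ℝ) 1) :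
    (∫ t in x..y, f t) + (∫ t in y..z, f t) = ∫ t in x..z, f t :=
  intervalIntegral.integral_add_adjacent_intervals (h.ii hx hy) (h.ii hy hz)

theorem Hyp.mean_add (h : Hyp f u u' θL θH) {x y z : ℝ} (hx : x ∈ Icc (0:ℝ) 1)
    (hy : y ∈ Icc (0:ℝ) 1) (hz : z ∈ Icc (0:ℝ) 1) :
    (∫ t in x..y, f t) * condMean f x y + (∫ t in y..z, f t) * condMean f y z
      = (∫ t in x..z, f t) * condMean f x z := by
  rw [h.mass_mul hx hy, h.mass_mul hy hz, h.mass_mul hx hz]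
  exact intervalIntegral.integral_add_adjacent_intervals (h.iit hx hy) (h.iit hy hz)

/-! tangent inequalities -/

theorem tan_lt {p q : ℝ} (hd : ∀ θ ∈ Icc p q, HasDerivAt u (u' θ) θ)
    (ha : StrictAntiOn u' (Icc p q)) {x y : ℝ} (hx : x ∈ Icc p q) (hy : y ∈ Icc p q) (hxy : x ≠ y) :
    u y < u x + u' x * (y - x) := by
  rcases lt_or_gt_of_ne hxy with h1 | h1
  · obtain ⟨c, hc, hc'⟩ := exists_hasDerivAt_eq_slope u u' h1
      (fun t ht => (hd t ⟨by linarith [ht.1, hx.1], by linarith [ht.2, hy.2]⟩).continuousAt.continuousWithinAt)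
      (fun t ht => hd t ⟨by linarith [ht.1, hx.1], by linarith [ht.2, hy.2]⟩)
    have := ha hx ⟨by linarith [hc.1, hx.1], by linarith [hc.2, hy.2]⟩ hc.1
    rw [eq_div_iff (by linarith)] at hc'
    nlinarith
  · obtain ⟨c, hc, hc'⟩ := exists_hasDerivAt_eq_slope u u' h1
      (fun t ht => (hd t ⟨by linarith [ht.1, hy.1], by linarith [ht.2, hx.2]⟩).continuousAt.continuousWithinAt)
      (fun t ht => hd t ⟨by linarith [ht.1, hy.1], by linarith [ht.2, hx.2]⟩)
    have := ha ⟨by linarith [hc.1, hy.1], by linarith [hc.2, hx.2]⟩ hx hc.2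
    rw [eq_div_iff (by linarith)] at hc'
    nlinarith

theorem tan_le {p q : ℝ} (hd : ∀ θ ∈ Icc p q, HasDerivAt u (u' θ) θ)
    (ha : StrictAntiOn u' (Icc p q)) {x y : ℝ} (hx : x ∈ Icc p q) (hy : y ∈ Icc p q) :
    u y ≤ u x + u' x * (y - x) := by
  by_cases hxy : x = y
  · subst hxy; simp
  · exact (tan_lt hd ha hx hy hxy).le

theorem Hyp.lt1 (h : Hyp f u u' θL θH) {x y : ℝ} (hx : x ∈ Icc 0 θL) (hy : y ∈ Icc 0 θL)
    (hxy : x ≠ y) : u y < u x + u' x * (y - x) :=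
  tan_lt (fun t ht => h.du t ⟨ht.1, by linarith [ht.2, h.LH, h.H1]⟩) h.anti1 hx hy hxy
theorem Hyp.le1 (h : Hyp f u u' θL θH) {x y : ℝ} (hx : x ∈ Icc 0 θL) (hy : y ∈ Icc 0 θL) :
    u y ≤ u x + u' x * (y - x) :=
  tan_le (fun t ht => h.du t ⟨ht.1, by linarith [ht.2, h.LH, h.H1]⟩) h.anti1 hx hy
theorem Hyp.le2 (h : Hyp f u u' θL θH) {x y : ℝ} (hx : x ∈ Icc θH 1) (hy : y ∈ Icc θH 1) :
    u y ≤ u x + u' x * (y - x) :=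
  tan_le (fun t ht => h.du t ⟨by linarith [ht.1, h.LH, h.L0], ht.2⟩) h.anti2 hx hy
theorem Hyp.lem (h : Hyp f u u' θL θH) {x y : ℝ} (hx : x ∈ Icc θL θH) (hy : y ∈ Icc θL θH) :
    u x + u' x * (y - x) ≤ u y := by
  have := tan_le (u := fun t => - u t) (u' := fun t => - u' t)
    (fun t ht => (h.du t ⟨by linarith [ht.1, h.L0], by linarith [ht.2, h.H1]⟩).neg) h.mono.neg hx hy
  linarith
theorem Hyp.ltm (h : Hyp f u u' θL θH) {x y : ℝ} (hx : x ∈ Icc θL θH) (hy : y ∈ Icc θL θH)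
    (hxy : x ≠ y) : u x + u' x * (y - x) < u y := by
  have := tan_lt (u := fun t => - u t) (u' := fun t => - u' t)
    (fun t ht => (h.du t ⟨by linarith [ht.1, h.L0], by linarith [ht.2, h.H1]⟩).neg) h.mono.neg hx hy hxy
  linarith

/-- reflection -/
theorem Hyp.refl (h : Hyp f u u' θL θH) :
    Hyp (fun t => f (1 - t)) (fun t => u (1 - t)) (fun t => - u' (1 - t)) (1 - θH) (1 - θL) where
  fpos := fun θ hθ => h.fpos _ ⟨by linarith [hθ.2], by linarith [hθ.1]⟩
  fint := by
    have h1 : IntervalIntegrable f volume 1 0 := h.ii ⟨zero_le_one, le_rfl⟩ ⟨le_rfl, zero_le_one⟩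
    have := h1.comp_sub_left 1
    simp only [sub_self, sub_zero] at this
    rwa [intervalIntegrable_iff_integrableOn_Icc_of_le zero_le_one] at this
  fone := by rw [refl_int f]; simpa using h.fone
  du := fun θ hθ => by
    have h1 := h.du (1 - θ) ⟨by linarith [hθ.2], by linarith [hθ.1]⟩
    have h2 : HasDerivAt (fun t : ℝ => 1 - t) (-1) θ := by
      simpa using (hasDerivAt_id θ).const_sub 1
    have h3 := HasDerivAt.comp θ h1 h2
    rw [mul_neg_one] at h3
    exact h3
  L0 := by linarith [h.H1]
  LH := by linarith [h.LH]
  H1 := by linarith [h.L0]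
  anti1 := fun x hx y hy hxy => by
    have := h.anti2 (a := 1 - y) (b := 1 - x) ⟨by linarith [hy.2], by linarith [hy.1]⟩
      ⟨by linarith [hx.2], by linarith [hx.1]⟩ (by linarith)
    simpa using this
  mono := fun x hx y hy hxy => by
    have := h.mono (a := 1 - y) (b := 1 - x) ⟨by linarith [hy.2], by linarith [hy.1]⟩
      ⟨by linarith [hx.2], by linarith [hx.1]⟩ (by linarith)
    simpa using this
  anti2 := fun x hx y hy hxy => by
    have := h.anti1 (a := 1 - y) (b := 1 - x) ⟨by linarith [hy.2], by linarith [hy.1]⟩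
      ⟨by linarith [hx.2], by linarith [hx.1]⟩ (by linarith)
    simpa using this

theorem Hyp.refl_cm (h : Hyp f u u' θL θH) {x y : ℝ} (hx : x ∈ Icc (0:ℝ) 1)
    (hy : y ∈ Icc (0:ℝ) 1) (hxy : x ≠ y) :
    condMean (fun t => f (1 - t)) x y = 1 - condMean f (1 - y) (1 - x) := by
  have hx' : 1 - x ∈ Icc (0:ℝ) 1 := ⟨by linarith [hx.2], by linarith [hx.1]⟩
  have hy' : 1 - y ∈ Icc (0:ℝ) 1 := ⟨by linarith [hy.2], by linarith [hy.1]⟩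
  have hne := h.mass_ne hy' hx' (fun e => hxy (by linarith))
  have e1 : (∫ t in x..y, t * f (1 - t)) = ∫ t in (1 - y)..(1 - x), (f t - t * f t) := by
    rw [← refl_int (fun t => f t - t * f t)]
    congr 1; ext t; ring
  unfold condMean
  rw [e1, refl_int f, intervalIntegral.integral_sub (h.ii hy' hx') (h.iit hy' hx')]
  field_simp

theorem Hyp.refl_pool (h : Hyp f u u' θL θH) {x y : ℝ} (hx : x ∈ Icc (0:ℝ) 1)
    (hy : y ∈ Icc (0:ℝ) 1) :
    pool (fun t => f (1 - t)) (fun t => u (1 - t)) x y = pool f u (1 - y) (1 - x) := by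
  by_cases hxy : x = y
  · subst hxy; simp [pool_self]
  · unfold pool
    rw [h.refl_cm hx hy hxy, refl_int f]; simp

end


section
variable {f u u' : ℝ → ℝ} {θL θH : ℝ}

/-- Local averages of a continuous function converge. -/
theorem Hyp.avg_tendsto (h : Hyp f u u' θL θH) {g : ℝ → ℝ} (hg : ContinuousOn g (Icc 0 1))
    {a : ℝ} (ha : a ∈ Ioo (0:ℝ) 1) :
    Tendsto (fun t => (∫ s in a..t, g s * f s) / (∫ s in a..t, f s)) (𝓝[≠] a) (𝓝 (g a)) := by
  have ha' : a ∈ Icc (0:ℝ) 1 := ⟨ha.1.le, ha.2.le⟩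
  have hgc : ContinuousAt g a := hg.continuousAt (Icc_mem_nhds ha.1 ha.2)
  rw [Metric.tendsto_nhds]
  intro ε hε
  have h1 : ∀ᶠ s in 𝓝 a, dist (g s) (g a) < ε / 2 :=
    (Metric.tendsto_nhds.1 hgc) (ε / 2) (by linarith)
  obtain ⟨δ, hδ, hball⟩ := Metric.eventually_nhds_iff.1 h1
  have h2 : ∀ᶠ t in 𝓝 a, dist t a < δ ∧ t ∈ Icc (0:ℝ) 1 :=
    (Filter.Eventually.and (Metric.ball_mem_nhds a hδ) (Icc_mem_nhds ha.1 ha.2))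
  filter_upwards [h2.filter_mono nhdsWithin_le_nhds, self_mem_nhdsWithin] with t ht hta
  have hne : (∫ s in a..t, f s) ≠ 0 := h.mass_ne ha' ht.2 (fun e => hta e.symm)
  have e1 : (∫ s in a..t, g s * f s) / (∫ s in a..t, f s) - g a
      = (∫ s in a..t, (g s - g a) * f s) / (∫ s in a..t, f s) := by
    have : (∫ s in a..t, (g s - g a) * f s)
        = (∫ s in a..t, g s * f s) - g a * (∫ s in a..t, f s) := by
      rw [← intervalIntegral.integral_const_mul, ← intervalIntegral.integral_sub
        (h.iig hg ha' ht.2) ((h.ii ha' ht.2).const_mul _)]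
      congr 1; ext s; ring
    rw [this]; field_simp
  rw [Real.dist_eq, e1, abs_div, div_lt_iff₀ (abs_pos.2 hne)]
  have e2 : |∫ s in a..t, (g s - g a) * f s| ≤ |∫ s in a..t, ε / 2 * f s| := by
    have := intervalIntegral.norm_integral_le_abs_of_norm_le (μ := volume) (a := a) (b := t)
      (f := fun s => (g s - g a) * f s) (g := fun s => ε / 2 * f s) ?_ ((h.ii ha' ht.2).const_mul _)
    · simpa [Real.norm_eq_abs] using this
    · apply (ae_restrict_mem measurableSet_uIoc).mono
      intro s hs
      have hs' : s ∈ uIcc a t := uIoc_subset_uIcc hs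
      have hs01 := uIcc_subset_Icc ha' ht.2 hs'
      have hfs := h.fpos s hs01
      have hd : dist s a < δ := by
        rw [Real.dist_eq]
        have := abs_sub_left_of_mem_uIcc hs'
        rw [Real.dist_eq] at ht
        exact lt_of_le_of_lt this ht.1
      have := hball hd
      rw [Real.dist_eq] at this
      rw [norm_mul, Real.norm_eq_abs, Real.norm_eq_abs, abs_of_pos hfs]
      exact mul_le_mul_of_nonneg_right this.le hfs.le
  rw [intervalIntegral.integral_const_mul, abs_mul, abs_of_pos (by linarith : 0 < ε / 2)] at e2
  have := abs_pos.2 hne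
  nlinarith

theorem Hyp.int_cont (h : Hyp f u u' θL θH) {g : ℝ → ℝ} (hg : ContinuousOn g (Icc 0 1))
    {c : ℝ} (hc : c ∈ Icc (0:ℝ) 1) :
    ContinuousOn (fun t => ∫ s in c..t, g s * f s) (Icc 0 1) := by
  have := intervalIntegral.continuousOn_primitive_interval' (μ := volume) (b₁ := 0) (b₂ := 1)
    (f := fun s => g s * f s) (a := c)
    (h.iig hg ⟨le_rfl, zero_le_one⟩ ⟨zero_le_one, le_rfl⟩)
    (by rw [uIcc_of_le (zero_le_one' ℝ)]; exact hc)
  rwa [uIcc_of_le (zero_le_one' ℝ)] at this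

theorem Hyp.mass_cont (h : Hyp f u u' θL θH) {c : ℝ} (hc : c ∈ Icc (0:ℝ) 1) :
    ContinuousOn (fun t => ∫ s in c..t, f s) (Icc 0 1) := by
  simpa using h.int_cont (g := fun _ => 1) continuousOn_const hc

theorem Hyp.cm_cont (h : Hyp f u u' θL θH) {c a : ℝ} (hc : c ∈ Icc (0:ℝ) 1)
    (ha : a ∈ Icc (0:ℝ) 1) (hca : c ≠ a) :
    ContinuousWithinAt (fun t => condMean f c t) (Icc 0 1) a := by
  unfold condMean
  exact (h.int_cont (g := fun t => t) continuousOn_id hc a ha).div (h.mass_cont hc a ha)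
    (h.mass_ne hc ha hca)

theorem Hyp.pool_cont (h : Hyp f u u' θL θH) {c : ℝ} (hc : c ∈ Icc (0:ℝ) 1) :
    ContinuousOn (fun t => pool f u c t) (Icc 0 1) := by
  intro a ha
  by_cases hca : c = a
  · subst hca
    obtain ⟨K, hK⟩ := (isCompact_Icc (a := (0:ℝ)) (b := 1)).exists_bound_of_continuousOn h.ucont
    unfold ContinuousWithinAt
    simp only [pool_self]
    have h0 : Tendsto (fun t => ∫ s in c..t, f s) (𝓝[Icc 0 1] c) (𝓝 0) := by
      have := h.mass_cont hc c hc
      unfold ContinuousWithinAt at this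
      simpa using this
    have h1 : Tendsto (fun t => |∫ s in c..t, f s| * K) (𝓝[Icc 0 1] c) (𝓝 0) := by
      simpa using h0.abs.mul_const K
    refine squeeze_zero_norm' ?_ h1
    filter_upwards [self_mem_nhdsWithin] with t ht
    unfold pool
    rw [norm_mul, Real.norm_eq_abs]
    exact mul_le_mul_of_nonneg_left (hK _ (h.cm_mem01 hc ht)) (abs_nonneg _)
  · unfold pool
    refine (h.mass_cont hc a ha).mul ?_
    exact ((h.du _ (h.cm_mem01 hc ha)).continuousAt).comp_continuousWithinAt (h.cm_cont hc ha hca)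

/-- derivative with respect to the measure `f dt` -/
def FD (f g : ℝ → ℝ) (D a : ℝ) : Prop :=
  Tendsto (fun t => (g t - g a) / (∫ s in a..t, f s)) (𝓝[≠] a) (𝓝 D)

theorem FD.add {g k : ℝ → ℝ} {D E a : ℝ} (hg : FD f g D a) (hk : FD f k E a) :
    FD f (fun t => g t + k t) (D + E) a := by
  unfold FD at *
  refine (Tendsto.add hg hk).congr (fun t => ?_)
  ring

theorem FD.neg {g : ℝ → ℝ} {D a : ℝ} (hg : FD f g D a) :
    FD f (fun t => - g t) (-D) a := by
  unfold FD at *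
  refine (Tendsto.neg hg).congr (fun t => ?_)
  ring

theorem Hyp.fd_right (h : Hyp f u u' θL θH) {g : ℝ → ℝ} {D a b : ℝ} (ha : 0 ≤ a) (hab : a < b)
    (hb : b ≤ 1) (hg : FD f g D a) (hm : ∀ t ∈ Icc a b, g t ≤ g a) : D ≤ 0 := by
  have h1 : Tendsto (fun t => (g t - g a) / (∫ s in a..t, f s)) (𝓝[>] a) (𝓝 D) :=
    hg.mono_left (nhdsWithin_mono _ (fun t ht => ne_of_gt ht))
  refine le_of_tendsto h1 ?_
  filter_upwards [Ioc_mem_nhdsGT hab] with t ht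
  apply div_nonpos_of_nonpos_of_nonneg
  · linarith [hm t ⟨ht.1.le, ht.2⟩]
  · exact (h.mass_pos ha ht.1 (by linarith [ht.2])).le

theorem Hyp.fd_left (h : Hyp f u u' θL θH) {g : ℝ → ℝ} {D a b : ℝ} (hb : 0 ≤ b) (hab : b < a)
    (ha : a ≤ 1) (hg : FD f g D a) (hm : ∀ t ∈ Icc b a, g t ≤ g a) : 0 ≤ D := by
  have h1 : Tendsto (fun t => (g t - g a) / (∫ s in a..t, f s)) (𝓝[<] a) (𝓝 D) :=
    hg.mono_left (nhdsWithin_mono _ (fun t ht => ne_of_lt ht))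
  refine ge_of_tendsto h1 ?_
  filter_upwards [Ico_mem_nhdsLT hab] with t ht
  apply div_nonneg_of_nonpos
  · linarith [hm t ⟨ht.1, ht.2.le⟩]
  · rw [intervalIntegral.integral_symm]
    linarith [h.mass_pos (by linarith [ht.1]) ht.2 ha]

theorem Hyp.fd_int (h : Hyp f u u' θL θH) {c a : ℝ} (hc : c ∈ Icc (0:ℝ) 1) (ha : a ∈ Ioo (0:ℝ) 1) :
    FD f (fun t => ∫ s in c..t, u s * f s) (u a) a := by
  have ha' : a ∈ Icc (0:ℝ) 1 := ⟨ha.1.le, ha.2.le⟩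
  unfold FD
  refine (h.avg_tendsto h.ucont ha).congr' ?_
  filter_upwards [mem_nhdsWithin_of_mem_nhds (Icc_mem_nhds ha.1 ha.2)] with t ht
  rw [← intervalIntegral.integral_add_adjacent_intervals (h.iiu hc ha') (h.iiu ha' ht)]
  ring

theorem Hyp.fd_int' (h : Hyp f u u' θL θH) {c a : ℝ} (hc : c ∈ Icc (0:ℝ) 1) (ha : a ∈ Ioo (0:ℝ) 1) :
    FD f (fun t => ∫ s in t..c, u s * f s) (- u a) a := by
  have := (h.fd_int hc ha).neg
  convert this using 2 with t
  rw [intervalIntegral.integral_symm]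

theorem Hyp.fd_pool (h : Hyp f u u' θL θH) {c a : ℝ} (hc : c ∈ Icc (0:ℝ) 1) (ha : a ∈ Ioo (0:ℝ) 1)
    (hca : c ≠ a) :
    FD f (fun t => pool f u c t)
      (u (condMean f c a) + u' (condMean f c a) * (a - condMean f c a)) a := by
  have ha' : a ∈ Icc (0:ℝ) 1 := ⟨ha.1.le, ha.2.le⟩
  have hd := h.du _ (h.cm_mem01 hc ha')
  set m := condMean f c a with hm
  have hcm : Tendsto (fun t => condMean f c t) (𝓝[≠] a) (𝓝 m) :=
    ((h.cm_cont hc ha' hca).continuousAt (Icc_mem_nhds ha.1 ha.2)).tendsto.mono_left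
      nhdsWithin_le_nhds
  have hU : ContinuousAt (dslope u m) m := continuousAt_dslope_same.2 hd.differentiableAt
  have hU' : Tendsto (fun t => dslope u m (condMean f c t)) (𝓝[≠] a) (𝓝 (u' m)) := by
    have := hU.tendsto.comp hcm
    rw [dslope_same, hd.deriv] at this
    exact this
  have hu' : Tendsto (fun t => u (condMean f c t)) (𝓝[≠] a) (𝓝 (u m)) :=
    hd.continuousAt.tendsto.comp hcm
  have hav : Tendsto (fun t => condMean f a t) (𝓝[≠] a) (𝓝 a) :=
    h.avg_tendsto (g := fun t => t) continuousOn_id ha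
  unfold FD
  refine (hu'.add (hU'.mul (hav.sub hcm))).congr' ?_
  filter_upwards [mem_nhdsWithin_of_mem_nhds (Icc_mem_nhds ha.1 ha.2), self_mem_nhdsWithin] with t ht hta
  have hne : (∫ s in a..t, f s) ≠ 0 := h.mass_ne ha' ht (fun e => hta e.symm)
  rw [eq_div_iff hne]
  unfold pool
  rw [← h.mass_add hc ha' ht]
  have e1 := h.mean_add hc ha' ht
  rw [← h.mass_add hc ha' ht] at e1
  have e2 : (condMean f c t - m) * dslope u m (condMean f c t) = u (condMean f c t) - u m := by
    have := sub_smul_dslope u m (condMean f c t)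
    simpa using this
  rw [← hm] at e1 ⊢
  have e3 : (∫ s in a..t, f s) * (condMean f a t - condMean f c t)
      = (∫ s in c..a, f s) * (condMean f c t - m) := by linarith
  linear_combination (dslope u m (condMean f c t)) * e3 + (∫ s in c..a, f s) * e2

theorem Hyp.fd_pool' (h : Hyp f u u' θL θH) {c a : ℝ} (hc : c ∈ Icc (0:ℝ) 1) (ha : a ∈ Ioo (0:ℝ) 1)
    (hca : c ≠ a) :
    FD f (fun t => pool f u t c)
      (-(u (condMean f a c) + u' (condMean f a c) * (a - condMean f a c))) a := by
  have := (h.fd_pool hc ha hca).neg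
  rw [condMean_symm a c]
  convert this using 2 with t
  rw [pool_symm]

theorem Hyp.pool_cont' (h : Hyp f u u' θL θH) {c : ℝ} (hc : c ∈ Icc (0:ℝ) 1) :
    ContinuousOn (fun t => pool f u t c) (Icc 0 1) := by
  have := (h.pool_cont hc).neg
  refine this.congr (fun t _ => ?_)
  simp [pool_symm t c]

end


section
variable {f u u' : ℝ → ℝ} {θL θH : ℝ}

theorem Hyp.mergeM (h : Hyp f u u' θL θH) {x1 m x w1 w2 : ℝ} (hw1 : 0 < w1) (hw2 : 0 < w2)
    (hx1 : 0 ≤ x1) (hm : m ∈ Ioc θL θH) (hx : w1 * x1 + w2 * m = (w1 + w2) * x) (hx1m : x1 < m)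
    (hle : u x1 ≤ u m + u' m * (x1 - m)) :
    w1 * u x1 + w2 * u m ≤ (w1 + w2) * u x ∧
      (u x1 < u m + u' m * (x1 - m) → w1 * u x1 + w2 * u m < (w1 + w2) * u x) := by
  have hxl : x1 < x := by nlinarith
  have hxm : x < m := by nlinarith
  have hmm : m ∈ Icc θL θH := ⟨hm.1.le, hm.2⟩
  have key : w1 * (u m + u' m * (x1 - m)) + w2 * u m = (w1 + w2) * (u m + u' m * (x - m)) := by
    linear_combination u' m * hx
  rcases le_or_gt θL x with hc | hc
  · have h1 := h.lem hmm (y := x) ⟨hc, by linarith [hm.2]⟩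
    have h2 : (w1 + w2) * (u m + u' m * (x - m)) ≤ (w1 + w2) * u x :=
      mul_le_mul_of_nonneg_left h1 (by linarith)
    constructor
    · nlinarith
    · intro hlt; nlinarith
  · have hX : x ∈ Icc 0 θL := ⟨by linarith, hc.le⟩
    have h1 := h.lt1 hX (y := x1) ⟨hx1, by linarith⟩ (by linarith)
    have h2 := h.lt1 hX (y := θL) ⟨h.L0.le, le_rfl⟩ (by linarith)
    have h3 := h.lem hmm (y := θL) ⟨le_rfl, h.LH.le⟩
    have goal : w1 * u x1 + w2 * u m < (w1 + w2) * u x := by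
      have e : w1 * (u x + u' x * (x1 - x)) + w2 * (u x + u' x * (m - x)) = (w1 + w2) * u x := by
        linear_combination u' x * hx
      rcases le_or_gt (u m) (u x + u' x * (m - x)) with h4 | h4
      · nlinarith
      · -- slope of the difference is negative
        have h5 : u m + u' m * (θL - m) < u x + u' x * (θL - x) := lt_of_le_of_lt h3 h2
        have h6 : u' x < u' m := by
          by_contra hcon
          push Not at hcon
          have := hm.1
          nlinarith
        have h7 : u m + u' m * (x - m) < u x := by nlinarith
        nlinarith
    exact ⟨goal.le, fun _ => goal⟩

/-- Two pools with posterior means in a concave region can be merged. -/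
theorem merge_conc {p q : ℝ} (hd : ∀ θ ∈ Icc p q, HasDerivAt u (u' θ) θ)
    (ha : StrictAntiOn u' (Icc p q)) {x1 m x w1 w2 : ℝ} (hw1 : 0 < w1) (hw2 : 0 < w2)
    (hx1 : p ≤ x1) (hm : m ≤ q) (hx : w1 * x1 + w2 * m = (w1 + w2) * x) (hx1m : x1 < m) :
    w1 * u x1 + w2 * u m < (w1 + w2) * u x := by
  have hxl : x1 < x := by nlinarith
  have hxm : x < m := by nlinarith
  have hX : x ∈ Icc p q := ⟨by linarith, by linarith⟩
  have h1 := tan_lt hd ha hX (y := x1) ⟨hx1, by linarith⟩ (by linarith)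
  have h2 := tan_lt hd ha hX (y := m) ⟨by linarith, hm⟩ (by linarith)
  have e : w1 * (u x + u' x * (x1 - x)) + w2 * (u x + u' x * (m - x)) = (w1 + w2) * u x := by
    linear_combination u' x * hx
  nlinarith

theorem Hyp.d1 (h : Hyp f u u' θL θH) : ∀ θ ∈ Icc 0 θL, HasDerivAt u (u' θ) θ :=
  fun t ht => h.du t ⟨ht.1, by linarith [ht.2, h.LH, h.H1]⟩
theorem Hyp.d2 (h : Hyp f u u' θL θH) : ∀ θ ∈ Icc θH 1, HasDerivAt u (u' θ) θ :=
  fun t ht => h.du t ⟨by linarith [ht.1, h.LH, h.L0], ht.2⟩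

/-- Kink analysis at a cut `a < θL` with matching tangents: merging strictly improves. -/
theorem Hyp.kink (h : Hyp f u u' θL θH) {a c : ℝ} (ha : 0 < a) (hac : a < c) (hc : c ≤ 1)
    (hfoc : u (condMean f 0 a) + u' (condMean f 0 a) * (a - condMean f 0 a)
      = u (condMean f a c) + u' (condMean f a c) * (a - condMean f a c))
    (haL : a < θL) (hmH : condMean f a c ≤ θH) :
    pool f u 0 a + pool f u a c < pool f u 0 c := by
  have h0 : (0:ℝ) ∈ Icc (0:ℝ) 1 := ⟨le_rfl, zero_le_one⟩
  have hA : a ∈ Icc (0:ℝ) 1 := ⟨ha.le, by linarith⟩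
  have hC : c ∈ Icc (0:ℝ) 1 := ⟨by linarith, hc⟩
  have w1 := h.mass_pos le_rfl ha hA.2
  have w2 := h.mass_pos ha.le hac hc
  have e1 := h.mean_add h0 hA hC
  have e0 := h.mass_add h0 hA hC
  have m1 := h.cm_mem le_rfl ha hA.2
  have m2 := h.cm_mem ha.le hac hc
  unfold pool
  rw [← e0] at e1 ⊢
  set x1 := condMean f 0 a
  set m := condMean f a c
  rcases le_or_gt m θL with hm | hm
  · exact merge_conc h.d1 h.anti1 w1 w2 m1.1.le hm e1 (by linarith [m1.2, m2.1])
  · have hx1 : x1 ∈ Icc 0 θL := ⟨m1.1.le, by linarith [m1.2]⟩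
    have haI : a ∈ Icc 0 θL := ⟨ha.le, haL.le⟩
    have hta := h.lt1 hx1 haI (by linarith [m1.2])
    have hsl := h.anti1 hx1 haI m1.2
    have hL := h.lem (x := m) (y := θL) ⟨hm.le, hmH⟩ ⟨le_rfl, h.LH.le⟩
    have hLa := h.lt1 haI (y := θL) ⟨h.L0.le, le_rfl⟩ (by linarith)
    have hLx := h.lt1 hx1 (y := θL) ⟨h.L0.le, le_rfl⟩ (by linarith [m1.2])
    have hslope : u' m < u' x1 := by
      by_contra hcon
      push Not at hcon
      nlinarith
    have hlt : u x1 < u m + u' m * (x1 - m) := by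
      have := m1.2
      nlinarith
    exact (h.mergeM w1 w2 m1.1.le ⟨hm, hmH⟩ e1 (by linarith [m1.2, m2.1]) hlt.le).2 hlt

/-- Improving a lower two-pool structure. -/
theorem Hyp.lower (h : Hyp f u u' θL θH) {a c : ℝ} (ha : 0 ≤ a) (hac : a ≤ c) (hc : c ≤ 1) :
    ∃ a', a' ≤ c ∧ 0 ≤ a' ∧
      pool f u 0 a + pool f u a c ≤ pool f u 0 a' + pool f u a' c ∧
      (a' = c ∨ (a' < c ∧ 0 < a' ∧ (θL ≤ a' ∨ θH < condMean f a' c))) := by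
  have h0 : (0:ℝ) ∈ Icc (0:ℝ) 1 := ⟨le_rfl, zero_le_one⟩
  have hC : c ∈ Icc (0:ℝ) 1 := ⟨by linarith, hc⟩
  have hsub : Icc 0 c ⊆ Icc (0:ℝ) 1 := Icc_subset_Icc le_rfl hc
  obtain ⟨t, ht, hmax⟩ := (isCompact_Icc (a := (0:ℝ)) (b := c)).exists_isMaxOn ⟨a, ha, hac⟩
    (((h.pool_cont h0).mono hsub).add ((h.pool_cont' hC).mono hsub))
  have hmax' : ∀ s ∈ Icc 0 c, pool f u 0 s + pool f u s c ≤ pool f u 0 t + pool f u t c :=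
    fun s hs => hmax hs
  have hcc : pool f u 0 c + pool f u c c = pool f u 0 c := by rw [pool_self, add_zero]
  rcases eq_or_lt_of_le ht.1 with h1 | h1
  · refine ⟨c, le_rfl, hC.1, ?_, Or.inl rfl⟩
    have := hmax' a ⟨ha, hac⟩
    rw [← h1, pool_self] at this
    rw [hcc]; linarith
  rcases eq_or_lt_of_le ht.2 with h2 | h2
  · exact ⟨t, ht.2, ht.1, hmax' a ⟨ha, hac⟩, Or.inl h2⟩
  by_cases h3 : θL ≤ t ∨ θH < condMean f t c
  · exact ⟨t, ht.2, ht.1, hmax' a ⟨ha, hac⟩, Or.inr ⟨h2, h1, h3⟩⟩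
  push Not at h3
  have hT : t ∈ Ioo (0:ℝ) 1 := ⟨h1, by linarith⟩
  have hfd := (h.fd_pool h0 hT h1.ne).add (h.fd_pool' hC hT h2.ne')
  have l1 := h.fd_right ht.1 h2 hc hfd (fun s hs => hmax' s ⟨by linarith [hs.1], hs.2⟩)
  have l2 := h.fd_left le_rfl h1 hT.2.le hfd (fun s hs => hmax' s ⟨hs.1, by linarith [hs.2]⟩)
  have := h.kink h1 h2 hc (by linarith) h3.1 h3.2
  have := hmax' c ⟨hC.1, le_rfl⟩
  linarith

theorem Hyp.pool_le_reveal (h : Hyp f u u' θL θH) {a c : ℝ} (ha : θL ≤ a) (hac : a ≤ c)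
    (hc : c ≤ θH) : pool f u a c ≤ ∫ t in a..c, u t * f t := by
  rcases eq_or_lt_of_le hac with h1 | h1
  · subst h1; simp [pool_self]
  have hA : a ∈ Icc (0:ℝ) 1 := ⟨by linarith [h.L0], by linarith [h.H1]⟩
  have hC : c ∈ Icc (0:ℝ) 1 := ⟨by linarith [h.L0], by linarith [h.H1]⟩
  have hm := h.cm_mem hA.1 h1 hC.2
  have e := h.mass_mul hA hC
  set m := condMean f a c with hmdef
  have : pool f u a c = ∫ t in a..c, ((u m - u' m * m) * f t + u' m * (t * f t)) := by
    rw [intervalIntegral.integral_add ((h.ii hA hC).const_mul _) ((h.iit hA hC).const_mul _),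
      intervalIntegral.integral_const_mul, intervalIntegral.integral_const_mul, ← e]
    unfold pool; rw [← hmdef]; ring
  rw [this]
  apply intervalIntegral.integral_mono_on hac
    (((h.ii hA hC).const_mul _).add ((h.iit hA hC).const_mul _)) (h.iiu hA hC)
  intro t ht
  have h1 := h.lem (x := m) (y := t) ⟨by linarith [hm.1], by linarith [hm.2]⟩
    ⟨by linarith [ht.1], by linarith [ht.2]⟩
  have h2 := h.fpos t ⟨by linarith [ht.1, hA.1], by linarith [ht.2, hC.2]⟩
  nlinarith

theorem Hyp.lowerR (h : Hyp f u u' θL θH) {a c : ℝ} (ha : 0 ≤ a) (hac : a ≤ c) (hcL : θL ≤ c)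
    (hc : c ≤ θH) :
    ∃ a' ∈ Icc θL c, pool f u 0 a + pool f u a c ≤ pool f u 0 a' + ∫ t in a'..c, u t * f t := by
  obtain ⟨a', h1, h2, h3, h4⟩ := h.lower ha hac (by linarith [h.H1] : c ≤ 1)
  rcases h4 with h4 | ⟨h4, h5, h6⟩
  · subst h4
    refine ⟨a', ⟨hcL, le_rfl⟩, ?_⟩
    simpa [pool_self] using h3
  · have := (h.cm_mem h2 h4 (by linarith [h.H1])).2
    have h7 : θL ≤ a' := by
      rcases h6 with h6 | h6
      · exact h6
      · linarith
    exact ⟨a', ⟨h7, h1⟩, by linarith [h.pool_le_reveal h7 h1 hc]⟩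

theorem Hyp.upperR (h : Hyp f u u' θL θH) {d b : ℝ} (hb : b ≤ 1) (hdb : d ≤ b) (hdL : θL ≤ d)
    (hd : d ≤ θH) :
    ∃ b' ∈ Icc d θH, pool f u d b + pool f u b 1 ≤ (∫ t in d..b', u t * f t) + pool f u b' 1 := by
  have hL := h.L0
  have hH := h.H1
  obtain ⟨a', ha', h1⟩ := h.refl.lowerR (a := 1 - b) (c := 1 - d) (by linarith) (by linarith)
    (by linarith) (by linarith)
  have i0 : (0:ℝ) ∈ Icc (0:ℝ) 1 := ⟨le_rfl, zero_le_one⟩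
  have iB : 1 - b ∈ Icc (0:ℝ) 1 := ⟨by linarith, by linarith⟩
  have iD : 1 - d ∈ Icc (0:ℝ) 1 := ⟨by linarith, by linarith⟩
  have iA : a' ∈ Icc (0:ℝ) 1 := ⟨by linarith [ha'.1], by linarith [ha'.2]⟩
  rw [h.refl_pool i0 iB, h.refl_pool iB iD, h.refl_pool i0 iA,
    refl_int (fun t => u t * f t)] at h1
  simp only [sub_zero, sub_sub_cancel] at h1
  exact ⟨1 - a', ⟨by linarith [ha'.2], by linarith [ha'.1]⟩, by linarith⟩

/-- For fixed `b`, optimising the lower cut. -/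
theorem Hyp.stepL (h : Hyp f u u' θL θH) {b : ℝ} {a : ℝ} (ha : θL ≤ a) (hab : a ≤ b) (hb : b ≤ θH) :
    ∃ a' ∈ Icc θL b, (pool f u 0 a + (∫ t in a..b, u t * f t)
        ≤ pool f u 0 a' + (∫ t in a'..b, u t * f t)) ∧
      (a' = b ∨ (θL < a' ∧ u (condMean f 0 a') + u' (condMean f 0 a') * (a' - condMean f 0 a') = u a')) := by
  have hL := h.L0
  have hH := h.H1
  have h0 : (0:ℝ) ∈ Icc (0:ℝ) 1 := ⟨le_rfl, zero_le_one⟩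
  have hB : b ∈ Icc (0:ℝ) 1 := ⟨by linarith, by linarith⟩
  have hsub : Icc θL b ⊆ Icc (0:ℝ) 1 := Icc_subset_Icc hL.le hB.2
  have hci : ContinuousOn (fun t => ∫ s in t..b, u s * f s) (Icc 0 1) := by
    refine (h.int_cont h.ucont hB).neg.congr (fun t _ => ?_)
    simp [intervalIntegral.integral_symm b t]
  obtain ⟨t, ht, hmax⟩ := (isCompact_Icc (a := θL) (b := b)).exists_isMaxOn ⟨a, ha, hab⟩
    (((h.pool_cont h0).mono hsub).add (hci.mono hsub))
  have hmax' : ∀ s ∈ Icc θL b, pool f u 0 s + (∫ r in s..b, u r * f r)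
    ≤ pool f u 0 t + (∫ r in t..b, u r * f r) := fun s hs => hmax hs
  refine ⟨t, ht, hmax' a ⟨ha, hab⟩, ?_⟩
  rcases eq_or_lt_of_le ht.2 with h2 | h2
  · exact Or.inl h2
  right
  have hT : t ∈ Ioo (0:ℝ) 1 := ⟨by linarith [ht.1], by linarith⟩
  have hfd := (h.fd_pool h0 hT hT.1.ne).add (h.fd_int' hB hT)
  have l1 := h.fd_right hT.1.le h2 hB.2 hfd (fun s hs => hmax' s ⟨by linarith [hs.1, ht.1], hs.2⟩)
  have hne : θL ≠ t := by
    intro e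
    have m1 := h.cm_mem le_rfl hT.1 hT.2.le
    have := h.lt1 (x := condMean f 0 t) (y := t) ⟨m1.1.le, by linarith [m1.2]⟩
      ⟨hT.1.le, by linarith⟩ (by linarith [m1.2])
    linarith
  have hlt : θL < t := lt_of_le_of_ne ht.1 hne
  have l2 := h.fd_left hL.le hlt hT.2.le hfd (fun s hs => hmax' s ⟨hs.1, by linarith [hs.2]⟩)
  exact ⟨hlt, by linarith⟩

theorem Hyp.stepH (h : Hyp f u u' θL θH) {a b : ℝ} (ha : θL ≤ a) (hab : a ≤ b) (hb : b ≤ θH) :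
    ∃ b' ∈ Icc a θH, ((∫ t in a..b, u t * f t) + pool f u b 1
        ≤ (∫ t in a..b', u t * f t) + pool f u b' 1) ∧
      (b' = a ∨ (b' < θH ∧ u (condMean f b' 1) + u' (condMean f b' 1) * (b' - condMean f b' 1) = u b')) := by
  have hL := h.L0
  have hH := h.H1
  obtain ⟨a', ha', h1, h2⟩ := h.refl.stepL (a := 1 - b) (b := 1 - a) (by linarith) (by linarith)
    (by linarith)
  have i0 : (0:ℝ) ∈ Icc (0:ℝ) 1 := ⟨le_rfl, zero_le_one⟩
  have iB : 1 - b ∈ Icc (0:ℝ) 1 := ⟨by linarith, by linarith⟩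
  have iA : a' ∈ Icc (0:ℝ) 1 := ⟨by linarith [ha'.1], by linarith [ha'.2]⟩
  rw [h.refl_pool i0 iB, h.refl_pool i0 iA,
    refl_int (fun t => u t * f t), refl_int (fun t => u t * f t)] at h1
  rw [h.refl_cm i0 iA (by linarith [ha'.1])] at h2
  simp only [sub_zero, sub_sub_cancel] at h1 h2
  refine ⟨1 - a', ⟨by linarith [ha'.2], by linarith [ha'.1]⟩, by linarith, ?_⟩
  rcases h2 with h2 | ⟨h2, h3⟩
  · left; linarith
  · right; refine ⟨by linarith, ?_⟩
    rw [← h3]; ring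

/-- Pool-reveal-pool is dominated by splits. -/
theorem Hyp.R_le (h : Hyp f u u' θL θH)
    (hnopair : ¬ ∃ x ∈ Ioo θL θH, ∃ y ∈ Ioo θL θH, x < y ∧
      u (condMean f 0 x) + u' (condMean f 0 x) * (x - condMean f 0 x) = u x ∧
      u (condMean f y 1) + u' (condMean f y 1) * (y - condMean f y 1) = u y)
    {v : ℝ} (hv : ∀ z ∈ Icc (0:ℝ) 1, pool f u 0 z + pool f u z 1 ≤ v)
    {a b : ℝ} (ha : θL ≤ a) (hab : a ≤ b) (hb : b ≤ θH) :
    pool f u 0 a + (∫ t in a..b, u t * f t) + pool f u b 1 ≤ v := by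
  have hL := h.L0
  have hH := h.H1
  obtain ⟨a', ha', h1, h2⟩ := h.stepL ha hab hb
  rcases h2 with h2 | ⟨h2, h3⟩
  · subst h2
    have := hv a' ⟨by linarith, by linarith⟩
    simp at h1
    linarith
  obtain ⟨b', hb', h4, h5⟩ := h.stepH ha'.1 ha'.2 hb
  rcases h5 with h5 | ⟨h5, h6⟩
  · subst h5
    have := hv b' ⟨by linarith, by linarith [hb'.2]⟩
    simp at h4
    linarith
  rcases eq_or_lt_of_le hb'.1 with h7 | h7
  · subst h7
    have := hv a' ⟨by linarith, by linarith [hb'.2]⟩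
    simp at h4
    linarith
  · exact absurd ⟨a', ⟨h2, by linarith⟩, b', ⟨by linarith, h5⟩, h7, h3, h6⟩ hnopair

/-- Three pools are dominated. -/
theorem Hyp.W_le (h : Hyp f u u' θL θH)
    {v : ℝ} (hv : ∀ z ∈ Icc (0:ℝ) 1, pool f u 0 z + pool f u z 1 ≤ v)
    (hR : ∀ a b, θL ≤ a → a ≤ b → b ≤ θH →
      pool f u 0 a + (∫ t in a..b, u t * f t) + pool f u b 1 ≤ v)
    {a b : ℝ} (ha : 0 ≤ a) (hab : a ≤ b) (hb : b ≤ 1) :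
    pool f u 0 a + pool f u a b + pool f u b 1 ≤ v := by
  have hL := h.L0
  have hH := h.H1
  obtain ⟨a', h1, h2, h3, h4⟩ := h.lower ha hab hb
  rcases h4 with h4 | ⟨h4, h5, h6⟩
  · subst h4
    have := hv a' ⟨h2, hb⟩
    rw [pool_self] at h3
    linarith
  by_cases h7 : θH < condMean f a' b
  · have hA : a' ∈ Icc (0:ℝ) 1 := ⟨h2, by linarith⟩
    have hv' := hv a' hA
    rcases eq_or_lt_of_le hb with h8 | h8
    · subst h8; rw [pool_self]; linarith
    have hB : b ∈ Icc (0:ℝ) 1 := ⟨by linarith, hb⟩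
    have i1 : (1:ℝ) ∈ Icc (0:ℝ) 1 := ⟨zero_le_one, le_rfl⟩
    have e1 := h.mean_add hA hB i1
    have e0 := h.mass_add hA hB i1
    have m1 := h.cm_mem h2 h4 hb
    have m2 := h.cm_mem hB.1 h8 le_rfl
    rw [← e0] at e1
    have := merge_conc h.d2 h.anti2 (h.mass_pos h2 h4 hb) (h.mass_pos hB.1 h8 le_rfl)
      h7.le m2.2.le e1 (by linarith [m1.2, m2.1])
    rw [e0] at this
    have : pool f u a' b + pool f u b 1 < pool f u a' 1 := this
    linarith
  · have h8 : θL ≤ a' := by tauto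
    have h9 := (h.cm_mem h2 h4 hb).1
    obtain ⟨b', hb', h10⟩ := h.upperR hb h1 h8 (by linarith)
    have := hR a' b' h8 hb'.1 hb'.2
    linarith

/-- location of the upper mean -/
theorem Hyp.loc (h : Hyp f u u' θL θH) {z : ℝ} (hz : z ∈ Ioo (0:ℝ) 1)
    (hfoc : u (condMean f 0 z) + u' (condMean f 0 z) * (z - condMean f 0 z)
      = u (condMean f z 1) + u' (condMean f z 1) * (z - condMean f z 1))
    (hE : pool f u 0 1 ≤ pool f u 0 z + pool f u z 1)
    (hR : θL ≤ z → ∀ b ∈ Icc z θH, (∫ t in z..b, u t * f t) + pool f u b 1 ≤ pool f u z 1) :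
    θH < condMean f z 1 := by
  by_contra hcon
  push Not at hcon
  rcases lt_or_ge z θL with h1 | h1
  · have := h.kink hz.1 hz.2 le_rfl hfoc h1 hcon
    linarith
  · have i1 : (1:ℝ) ∈ Icc (0:ℝ) 1 := ⟨zero_le_one, le_rfl⟩
    have m := h.cm_mem hz.1.le hz.2 le_rfl
    have h2 := h.ltm (x := condMean f z 1) (y := z) ⟨by linarith [m.1], hcon⟩
      ⟨h1, by linarith [m.1]⟩ (by linarith [m.1])
    have hfd := (h.fd_int (c := z) ⟨hz.1.le, hz.2.le⟩ hz).add (h.fd_pool' i1 hz hz.2.ne')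
    have := h.fd_right hz.1.le (b := θH) (by linarith [m.1]) h.H1.le hfd
      (fun t ht => by simpa using hR h1 t ht)
    linarith

theorem Hyp.locL (h : Hyp f u u' θL θH) {z : ℝ} (hz : z ∈ Ioo (0:ℝ) 1)
    (hfoc : u (condMean f 0 z) + u' (condMean f 0 z) * (z - condMean f 0 z)
      = u (condMean f z 1) + u' (condMean f z 1) * (z - condMean f z 1))
    (hE : pool f u 0 1 ≤ pool f u 0 z + pool f u z 1)
    (hR : z ≤ θH → ∀ a ∈ Icc θL z, pool f u 0 a + (∫ t in a..z, u t * f t) ≤ pool f u 0 z) :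
    condMean f 0 z < θL := by
  have i0 : (0:ℝ) ∈ Icc (0:ℝ) 1 := ⟨le_rfl, zero_le_one⟩
  have i1 : (1:ℝ) ∈ Icc (0:ℝ) 1 := ⟨zero_le_one, le_rfl⟩
  have iz : 1 - z ∈ Icc (0:ℝ) 1 := ⟨by linarith [hz.2], by linarith [hz.1]⟩
  have := h.refl.loc (z := 1 - z) ⟨by linarith [hz.2], by linarith [hz.1]⟩ ?_ ?_ ?_
  · rw [h.refl_cm iz i1 (by linarith [hz.1])] at this
    simp at this; exact this
  · rw [h.refl_cm iz i1 (by linarith [hz.1]), h.refl_cm i0 iz (by linarith [hz.2])]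
    simp only [sub_zero, sub_sub_cancel, sub_self]
    linarith
  · rw [h.refl_pool i0 i1, h.refl_pool i0 iz, h.refl_pool iz i1]
    simp only [sub_zero, sub_sub_cancel, sub_self]
    linarith
  · intro h1 b hb
    have ib : b ∈ Icc (0:ℝ) 1 := ⟨by linarith [hb.1, hz.2], by linarith [hb.2, h.L0]⟩
    rw [h.refl_pool ib i1, h.refl_pool iz i1, refl_int (fun t => u t * f t)]
    simp only [sub_zero, sub_sub_cancel, sub_self]
    have := hR (by linarith) (1 - b) ⟨by linarith [hb.2], by linarith [hb.1]⟩
    linarith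

end


section
variable {f u u' : ℝ → ℝ} {θL θH : ℝ} {Q : Set ℝ}

theorem ball_in (hQ : IsPoolingSet Q) {x : ℝ} (hx : x ∈ Q) (h01 : x ∈ Ioo (0:ℝ) 1) :
    ∃ ε > 0, Ioo (x - ε) (x + ε) ⊆ Q := by
  obtain ⟨U, hU, rfl⟩ := hQ
  have : U ∩ Ioo 0 1 ∈ 𝓝 x := (hU.inter isOpen_Ioo).mem_nhds ⟨hx.1, h01⟩
  obtain ⟨ε, hε, hb⟩ := Metric.mem_nhds_iff.1 this
  rw [Real.ball_eq_Ioo] at hb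
  exact ⟨ε, hε, fun y hy => ⟨(hb hy).1, Ioo_subset_Icc_self (hb hy).2⟩⟩

theorem comp_sub (hQ : IsPoolingSet Q) {x : ℝ} (hx : x ∈ Q) (h01 : x ∈ Ioo (0:ℝ) 1) :
    ∃ ε > 0, Ioo (x - ε) (x + ε) ⊆ connectedComponentIn Q x := by
  obtain ⟨ε, hε, hb⟩ := ball_in hQ hx h01
  exact ⟨ε, hε, isPreconnected_Ioo.subset_connectedComponentIn
    ⟨by linarith, by linarith⟩ hb⟩

theorem comp_facts (hQ : IsPoolingSet Q) {x : ℝ} (hx : x ∈ Q) (h01 : x ∈ Ioo (0:ℝ) 1) :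
    0 ≤ compInf Q x ∧ compInf Q x < x ∧ x < compSup Q x ∧ compSup Q x ≤ 1 ∧
    Ioo (compInf Q x) (compSup Q x) ⊆ Q ∧
    (∀ y ∈ Ioo (compInf Q x) (compSup Q x), compInf Q y = compInf Q x ∧ compSup Q y = compSup Q x) ∧
    (compInf Q x ∈ Q → compInf Q x = 0) ∧ (compSup Q x ∈ Q → compSup Q x = 1) := by
  have hxC : x ∈ connectedComponentIn Q x := mem_connectedComponentIn hx
  have hCQ : connectedComponentIn Q x ⊆ Q := connectedComponentIn_subset Q x
  have hQ01 : Q ⊆ Icc 0 1 := by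
    obtain ⟨U, hU, rfl⟩ := hQ; exact inter_subset_right
  have hoc : OrdConnected (connectedComponentIn Q x) :=
    isPreconnected_connectedComponentIn.ordConnected
  have hbb : BddBelow (connectedComponentIn Q x) := ⟨0, fun y hy => (hQ01 (hCQ hy)).1⟩
  have hba : BddAbove (connectedComponentIn Q x) := ⟨1, fun y hy => (hQ01 (hCQ hy)).2⟩
  have hne : (connectedComponentIn Q x).Nonempty := ⟨x, hxC⟩
  obtain ⟨ε, hε, hb⟩ := comp_sub hQ hx h01
  have l1 : compInf Q x < x := by
    have := csInf_le hbb (hb (a := x - ε / 2) ⟨by linarith, by linarith⟩)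
    unfold compInf; linarith
  have l2 : x < compSup Q x := by
    have := le_csSup hba (hb (a := x + ε / 2) ⟨by linarith, by linarith⟩)
    unfold compSup; linarith
  have l3 : 0 ≤ compInf Q x := le_csInf hne (fun y hy => (hQ01 (hCQ hy)).1)
  have l4 : compSup Q x ≤ 1 := csSup_le hne (fun y hy => (hQ01 (hCQ hy)).2)
  have hI : Ioo (compInf Q x) (compSup Q x) ⊆ connectedComponentIn Q x := by
    intro y hy
    obtain ⟨c1, hc1, hc1'⟩ := exists_lt_of_csInf_lt hne hy.1
    obtain ⟨c2, hc2, hc2'⟩ := exists_lt_of_lt_csSup hne hy.2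
    exact hoc.out hc1 hc2 ⟨hc1'.le, hc2'.le⟩
  have heq : ∀ y ∈ Ioo (compInf Q x) (compSup Q x),
      connectedComponentIn Q y = connectedComponentIn Q x :=
    fun y hy => (connectedComponentIn_eq (hI hy)).symm
  refine ⟨l3, l1, l2, l4, hI.trans hCQ, fun y hy => ?_, fun hq => ?_, fun hq => ?_⟩
  · unfold compInf compSup; rw [heq y hy]; exact ⟨rfl, rfl⟩
  · by_contra hcon
    obtain ⟨δ, hδ, hbδ⟩ := ball_in hQ hq ⟨lt_of_le_of_ne l3 (Ne.symm hcon), by linarith [h01.2]⟩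
    set ξ := compInf Q x
    set y := min (ξ + δ / 2) ((ξ + x) / 2)
    have y1 : ξ < y := lt_min (by linarith) (by linarith)
    have y2 : y ≤ ξ + δ / 2 := min_le_left _ _
    have y3 : y ≤ (ξ + x) / 2 := min_le_right _ _
    have hs := isPreconnected_Ioo.subset_connectedComponentIn (x := y)
      ⟨by linarith, by linarith⟩ hbδ
    rw [heq y ⟨y1, by linarith⟩] at hs
    have := csInf_le hbb (hs (a := ξ - δ / 2) ⟨by linarith, by linarith⟩)
    have e : ξ = sInf (connectedComponentIn Q x) := rfl
    linarith
  · by_contra hcon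
    obtain ⟨δ, hδ, hbδ⟩ := ball_in hQ hq ⟨by linarith [h01.1], lt_of_le_of_ne l4 hcon⟩
    set ζ := compSup Q x
    set y := max (ζ - δ / 2) ((ζ + x) / 2)
    have y1 : y < ζ := max_lt (by linarith) (by linarith)
    have y2 : ζ - δ / 2 ≤ y := le_max_left _ _
    have y3 : (ζ + x) / 2 ≤ y := le_max_right _ _
    have hs := isPreconnected_Ioo.subset_connectedComponentIn (x := y)
      ⟨by linarith, by linarith⟩ hbδ
    rw [heq y ⟨by linarith, y1⟩] at hs
    have := le_csSup hba (hs (a := ζ + δ / 2) ⟨by linarith, by linarith⟩)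
    have e : ζ = sSup (connectedComponentIn Q x) := rfl
    linarith

/-- Cut points of a pooling set. -/
def Cut (Q : Set ℝ) (p : ℝ) : Prop := p ∈ Icc (0:ℝ) 1 ∧ (p ∈ Q → p = 0 ∨ p = 1)

theorem Hyp.M_const (hQ : IsPoolingSet Q) {x : ℝ} (hx : x ∈ Q)
    (h01 : x ∈ Ioo (0:ℝ) 1) {y : ℝ} (hy : y ∈ Ioo (compInf Q x) (compSup Q x)) :
    poolMean f Q y = condMean f (compInf Q x) (compSup Q x) := by
  obtain ⟨h1, h2, h3, h4, h5, h6, h7, h8⟩ := comp_facts hQ hx h01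
  unfold poolMean
  rw [if_pos (h5 hy), (h6 y hy).1, (h6 y hy).2]

theorem cut_le_inf (hQ : IsPoolingSet Q) {p x : ℝ} (hp : Cut Q p) (hx : x ∈ Q)
    (h01 : x ∈ Ioo (0:ℝ) 1) (hpx : p ≤ x) : p ≤ compInf Q x := by
  obtain ⟨h1, h2, h3, h4, h5, h6, h7, h8⟩ := comp_facts hQ hx h01
  by_contra hcon
  push Not at hcon
  rcases hp.2 (h5 ⟨hcon, by linarith⟩) with h | h
  · linarith
  · linarith [h01.2]

theorem sup_le_cut (hQ : IsPoolingSet Q) {p x : ℝ} (hp : Cut Q p) (hx : x ∈ Q)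
    (h01 : x ∈ Ioo (0:ℝ) 1) (hpx : x ≤ p) : compSup Q x ≤ p := by
  obtain ⟨h1, h2, h3, h4, h5, h6, h7, h8⟩ := comp_facts hQ hx h01
  by_contra hcon
  push Not at hcon
  rcases hp.2 (h5 ⟨by linarith, hcon⟩) with h | h
  · linarith [h01.1]
  · linarith

theorem cut_inf (hQ : IsPoolingSet Q) {x : ℝ} (hx : x ∈ Q) (h01 : x ∈ Ioo (0:ℝ) 1) :
    Cut Q (compInf Q x) := by
  obtain ⟨h1, h2, h3, h4, h5, h6, h7, h8⟩ := comp_facts hQ hx h01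
  exact ⟨⟨h1, by linarith [h01.2]⟩, fun h => Or.inl (h7 h)⟩

theorem cut_sup (hQ : IsPoolingSet Q) {x : ℝ} (hx : x ∈ Q) (h01 : x ∈ Ioo (0:ℝ) 1) :
    Cut Q (compSup Q x) := by
  obtain ⟨h1, h2, h3, h4, h5, h6, h7, h8⟩ := comp_facts hQ hx h01
  exact ⟨⟨by linarith [h01.1], h4⟩, fun h => Or.inr (h8 h)⟩

theorem Hyp.M_ge (h : Hyp f u u' θL θH) (hQ : IsPoolingSet Q) {p x : ℝ} (hp : Cut Q p)
    (h01 : x ∈ Ioo (0:ℝ) 1) (hpx : p ≤ x) : p ≤ poolMean f Q x := by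
  by_cases hx : x ∈ Q
  · obtain ⟨h1, h2, h3, h4, -⟩ := comp_facts hQ hx h01
    have := cut_le_inf hQ hp hx h01 hpx
    rw [M_const hQ hx h01 ⟨h2, h3⟩]
    linarith [(h.cm_mem h1 (h2.trans h3) h4).1]
  · simpa [poolMean, hx] using hpx

theorem Hyp.M_le (h : Hyp f u u' θL θH) (hQ : IsPoolingSet Q) {p x : ℝ} (hp : Cut Q p)
    (h01 : x ∈ Ioo (0:ℝ) 1) (hpx : x ≤ p) : poolMean f Q x ≤ p := by
  by_cases hx : x ∈ Q
  · obtain ⟨h1, h2, h3, h4, -⟩ := comp_facts hQ hx h01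
    have := sup_le_cut hQ hp hx h01 hpx
    rw [M_const hQ hx h01 ⟨h2, h3⟩]
    linarith [(h.cm_mem h1 (h2.trans h3) h4).2]
  · simpa [poolMean, hx] using hpx

theorem cut0 : Cut Q 0 := ⟨⟨le_rfl, zero_le_one⟩, fun _ => Or.inl rfl⟩
theorem cut1 : Cut Q 1 := ⟨⟨zero_le_one, le_rfl⟩, fun _ => Or.inr rfl⟩

theorem Hyp.M_mono (h : Hyp f u u' θL θH) (hQ : IsPoolingSet Q) :
    MonotoneOn (poolMean f Q) (Ioo 0 1) := by
  intro x hx y hy hxy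
  by_cases hxQ : x ∈ Q
  · obtain ⟨h1, h2, h3, h4, -⟩ := comp_facts hQ hxQ hx
    rcases lt_or_ge y (compSup Q x) with h5 | h5
    · rw [M_const hQ hxQ hx ⟨h2, h3⟩, M_const hQ hxQ hx ⟨by linarith, h5⟩]
    · exact (h.M_le hQ (cut_sup hQ hxQ hx) hx h3.le).trans (h.M_ge hQ (cut_sup hQ hxQ hx) hy h5)
  · have hc : Cut Q x := ⟨⟨hx.1.le, hx.2.le⟩, fun h => absurd h hxQ⟩
    have : poolMean f Q x = x := by simp [poolMean, hxQ]
    rw [this]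
    exact h.M_ge hQ hc hy hxy

theorem Hyp.M_int (h : Hyp f u u' θL θH) (hQ : IsPoolingSet Q) {g : ℝ → ℝ}
    (hg : ContinuousOn g (Icc 0 1)) :
    IntegrableOn (fun t => g (poolMean f Q t) * f t) (Ioo 0 1) := by
  have hM : AEMeasurable (poolMean f Q) (volume.restrict (Ioo 0 1)) :=
    aemeasurable_restrict_of_monotoneOn measurableSet_Ioo (h.M_mono hQ)
  obtain ⟨K, hK⟩ := (isCompact_Icc (a := (0:ℝ)) (b := 1)).exists_bound_of_continuousOn hg
  have h01 : ∀ t ∈ Ioo (0:ℝ) 1, poolMean f Q t ∈ Icc (0:ℝ) 1 := fun t ht =>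
    ⟨h.M_ge hQ cut0 ht ht.1.le, h.M_le hQ cut1 ht ht.2.le⟩
  -- a continuous extension of g
  have hgc : Continuous (fun x => g (projIcc 0 1 (zero_le_one' ℝ) x)) :=
    (continuousOn_iff_continuous_domRestrict.1 hg).comp continuous_projIcc
  have hmeas : AEStronglyMeasurable (fun t => g (poolMean f Q t)) (volume.restrict (Ioo 0 1)) := by
    have h1 := (hgc.measurable.comp_aemeasurable hM).aestronglyMeasurable
    refine h1.congr ?_
    filter_upwards [ae_restrict_mem measurableSet_Ioo] with t ht
    simp [projIcc_of_mem _ (h01 t ht)]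
  refine Integrable.bdd_mul (c := K) (h.fint.mono_set Ioo_subset_Icc_self) hmeas ?_
  filter_upwards [ae_restrict_mem measurableSet_Ioo] with t ht
  exact hK _ (h01 t ht)

theorem Hyp.M_ii (h : Hyp f u u' θL θH) (hQ : IsPoolingSet Q) {g : ℝ → ℝ}
    (hg : ContinuousOn g (Icc 0 1)) {x y : ℝ} (hx : x ∈ Icc (0:ℝ) 1) (hy : y ∈ Icc (0:ℝ) 1) :
    IntervalIntegrable (fun t => g (poolMean f Q t) * f t) volume x y := by
  have : IntervalIntegrable (fun t => g (poolMean f Q t) * f t) volume 0 1 := by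
    rw [intervalIntegrable_iff_integrableOn_Ioo_of_le zero_le_one]; exact h.M_int hQ hg
  apply this.mono_set
  rw [uIcc_of_le (zero_le_one' ℝ)]
  exact uIcc_subset_Icc hx hy

/-- Integrating component by component. -/
theorem comp_nonneg (hQ : IsPoolingSet Q) {p q : ℝ} (hp : Cut Q p) (hq : Cut Q q) (hpq : p ≤ q)
    {k : ℝ → ℝ} (hk : IntegrableOn k (Ioo p q))
    (hoff : ∀ t ∈ Ioo p q, t ∉ Q → 0 ≤ k t)
    (hon : ∀ x ∈ Ioo p q, x ∈ Q → 0 ≤ ∫ t in (compInf Q x)..(compSup Q x), k t) :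
    0 ≤ ∫ t in p..q, k t := by
  have hsub01 : Ioo p q ⊆ Ioo 0 1 := Ioo_subset_Ioo hp.1.1 hq.1.2
  rw [intervalIntegral.integral_of_le hpq, integral_Ioc_eq_integral_Ioo]
  set 𝒞 : Set (Set ℝ) := Set.image (fun x => Ioo (compInf Q x) (compSup Q x)) (Q ∩ Ioo p q) with h𝒞
  have hun : ⋃₀ 𝒞 = Q ∩ Ioo p q := by
    ext t
    constructor
    · rintro ⟨s, ⟨x, hx, rfl⟩, ht⟩
      obtain ⟨h1, h2, h3, h4, h5, -⟩ := comp_facts hQ hx.1 (hsub01 hx.2)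
      have l1 := cut_le_inf hQ hp hx.1 (hsub01 hx.2) hx.2.1.le
      have l2 := sup_le_cut hQ hq hx.1 (hsub01 hx.2) hx.2.2.le
      exact ⟨h5 ht, lt_of_le_of_lt l1 ht.1, lt_of_lt_of_le ht.2 l2⟩
    · intro ht
      obtain ⟨h1, h2, h3, -⟩ := comp_facts hQ ht.1 (hsub01 ht.2)
      exact ⟨_, ⟨t, ht, rfl⟩, h2, h3⟩
  have hdisj : 𝒞.PairwiseDisjoint id := by
    rintro _ ⟨x, hx, rfl⟩ _ ⟨y, hy, rfl⟩ hne
    rw [Function.onFun, Set.disjoint_left]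
    intro t htx hty
    apply hne
    obtain ⟨-, -, -, -, -, h6, -⟩ := comp_facts hQ hx.1 (hsub01 hx.2)
    obtain ⟨-, -, -, -, -, h6', -⟩ := comp_facts hQ hy.1 (hsub01 hy.2)
    have a1 := h6 t htx
    have a2 := h6' t hty
    simp only
    rw [← a1.1, ← a1.2, ← a2.1, ← a2.2]
  have hcount : 𝒞.Countable := by
    apply hdisj.countable_of_isOpen
    · rintro _ ⟨x, hx, rfl⟩; exact isOpen_Ioo
    · rintro _ ⟨x, hx, rfl⟩
      obtain ⟨h1, h2, h3, -⟩ := comp_facts hQ hx.1 (hsub01 hx.2)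
      exact ⟨x, h2, h3⟩
  have hmO : MeasurableSet (Q ∩ Ioo p q) := by
    rw [← hun]
    apply MeasurableSet.sUnion hcount
    rintro _ ⟨x, hx, rfl⟩; exact measurableSet_Ioo
  have hsplit := integral_inter_add_sdiff (s := Ioo p q) (t := Q ∩ Ioo p q) hmO hk
  rw [← hsplit]
  apply add_nonneg
  · have e : Ioo p q ∩ (Q ∩ Ioo p q) = ⋃ s : 𝒞, (s : Set ℝ) := by
      rw [← sUnion_eq_iUnion, hun]
      ext t; simp only [mem_inter_iff]; tauto
    have : Countable 𝒞 := hcount.to_subtype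
    rw [e, integral_iUnion]
    · apply tsum_nonneg
      rintro ⟨_, x, hx, rfl⟩
      have := hon x hx.2 hx.1
      obtain ⟨h1, h2, h3, -⟩ := comp_facts hQ hx.1 (hsub01 hx.2)
      rwa [intervalIntegral.integral_of_le (h2.trans h3).le, integral_Ioc_eq_integral_Ioo] at this
    · rintro ⟨_, x, hx, rfl⟩; exact measurableSet_Ioo
    · rintro ⟨s, hs⟩ ⟨t, ht⟩ hst
      exact hdisj hs ht (fun e => hst (Subtype.ext e))
    · apply hk.mono_set
      rw [← e]; exact inter_subset_left
  · apply setIntegral_nonneg (measurableSet_Ioo.diff hmO)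
    intro t ht
    exact hoff t ht.1 (fun hq => ht.2 ⟨hq, ht.1⟩)

theorem Hyp.comp_val (h : Hyp f u u' θL θH) (hQ : IsPoolingSet Q) {x : ℝ} (hx : x ∈ Q)
    (h01 : x ∈ Ioo (0:ℝ) 1) (g : ℝ → ℝ) :
    (∫ t in (compInf Q x)..(compSup Q x), g (poolMean f Q t) * f t)
      = pool f g (compInf Q x) (compSup Q x) := by
  obtain ⟨h1, h2, h3, h4, -⟩ := comp_facts hQ hx h01
  unfold pool
  rw [mul_comm, ← intervalIntegral.integral_const_mul,
    intervalIntegral.integral_of_le (h2.trans h3).le, integral_Ioc_eq_integral_Ioo,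
    intervalIntegral.integral_of_le (h2.trans h3).le, integral_Ioc_eq_integral_Ioo]
  apply setIntegral_congr_fun measurableSet_Ioo
  intro t ht
  simp only
  rw [M_const hQ hx h01 ht]

/-- The mean is preserved between cuts. -/
theorem Hyp.M_mean (h : Hyp f u u' θL θH) (hQ : IsPoolingSet Q) {p q : ℝ} (hp : Cut Q p)
    (hq : Cut Q q) (hpq : p ≤ q) :
    (∫ t in p..q, poolMean f Q t * f t) = ∫ t in p..q, t * f t := by
  have i1 := fun {x y : ℝ} (hx : x ∈ Icc (0:ℝ) 1) (hy : y ∈ Icc (0:ℝ) 1) =>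
    h.M_ii hQ (g := fun t => t) continuousOn_id hx hy
  have hsub01 : Ioo p q ⊆ Ioo 0 1 := Ioo_subset_Ioo hp.1.1 hq.1.2
  have hcomp : ∀ x ∈ Ioo p q, x ∈ Q →
      (∫ t in (compInf Q x)..(compSup Q x), poolMean f Q t * f t)
        = ∫ t in (compInf Q x)..(compSup Q x), t * f t := by
    intro x hx hxQ
    have := h.comp_val hQ hxQ (hsub01 hx) (fun t => t)
    rw [this]
    exact h.mass_mul (cut_inf hQ hxQ (hsub01 hx)).1 (cut_sup hQ hxQ (hsub01 hx)).1
  have hI : IntegrableOn (fun t => poolMean f Q t * f t - t * f t) (Ioo p q) := by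
    rw [← intervalIntegrable_iff_integrableOn_Ioo_of_le hpq]
    exact (i1 hp.1 hq.1).sub (h.iit hp.1 hq.1)
  have hI' : IntegrableOn (fun t => t * f t - poolMean f Q t * f t) (Ioo p q) := by
    rw [← intervalIntegrable_iff_integrableOn_Ioo_of_le hpq]
    exact (h.iit hp.1 hq.1).sub (i1 hp.1 hq.1)
  have a1 := comp_nonneg hQ hp hq hpq hI (fun t ht htQ => by simp [poolMean, htQ])
    (fun x hx hxQ => by
      have c1 := (cut_inf hQ hxQ (hsub01 hx)).1
      have c2 := (cut_sup hQ hxQ (hsub01 hx)).1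
      rw [intervalIntegral.integral_sub (i1 c1 c2) (h.iit c1 c2), hcomp x hx hxQ, sub_self])
  have a2 := comp_nonneg hQ hp hq hpq hI' (fun t ht htQ => by simp [poolMean, htQ])
    (fun x hx hxQ => by
      have c1 := (cut_inf hQ hxQ (hsub01 hx)).1
      have c2 := (cut_sup hQ hxQ (hsub01 hx)).1
      rw [intervalIntegral.integral_sub (h.iit c1 c2) (i1 c1 c2), hcomp x hx hxQ, sub_self])
  rw [intervalIntegral.integral_sub (i1 hp.1 hq.1) (h.iit hp.1 hq.1)] at a1
  rw [intervalIntegral.integral_sub (h.iit hp.1 hq.1) (i1 hp.1 hq.1)] at a2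
  linarith

theorem Hyp.conc_piece (h : Hyp f u u' θL θH) (hQ : IsPoolingSet Q) {p q : ℝ} (hp : Cut Q p)
    (hq : Cut Q q) (hpq : p ≤ q)
    (hc : ∀ x ∈ Icc p q, ∀ y ∈ Icc p q, u y ≤ u x + u' x * (y - x)) :
    (∫ t in p..q, u (poolMean f Q t) * f t) ≤ pool f u p q := by
  rcases eq_or_lt_of_le hpq with h1 | h1
  · subst h1; simp [pool_self]
  have hm := h.cm_mem hp.1.1 h1 hq.1.2
  have e := h.mass_mul hp.1 hq.1
  set m := condMean f p q with hmdef
  have iM := h.M_ii hQ (g := fun t => t) continuousOn_id hp.1 hq.1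
  have : pool f u p q
      = ∫ t in p..q, ((u m - u' m * m) * f t + u' m * (poolMean f Q t * f t)) := by
    rw [intervalIntegral.integral_add ((h.ii hp.1 hq.1).const_mul _) (iM.const_mul _),
      intervalIntegral.integral_const_mul, intervalIntegral.integral_const_mul,
      h.M_mean hQ hp hq hpq, ← e]
    unfold pool; rw [← hmdef]; ring
  rw [this]
  apply intervalIntegral.integral_mono_on_of_le_Ioo hpq (h.M_ii hQ h.ucont hp.1 hq.1)
    (((h.ii hp.1 hq.1).const_mul _).add (iM.const_mul _))
  intro t ht
  have ht01 : t ∈ Ioo (0:ℝ) 1 := ⟨lt_of_le_of_lt hp.1.1 ht.1, lt_of_lt_of_le ht.2 hq.1.2⟩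
  have h1 := hc m ⟨hm.1.le, hm.2.le⟩ (poolMean f Q t)
    ⟨h.M_ge hQ hp ht01 ht.1.le, h.M_le hQ hq ht01 ht.2.le⟩
  have h2 := h.fpos t ⟨ht01.1.le, ht01.2.le⟩
  nlinarith

theorem Hyp.conv_piece (h : Hyp f u u' θL θH) (hQ : IsPoolingSet Q) {p q : ℝ} (hp : Cut Q p)
    (hq : Cut Q q) (hpq : p ≤ q) (hL : θL ≤ p) (hH : q ≤ θH) :
    (∫ t in p..q, u (poolMean f Q t) * f t) ≤ ∫ t in p..q, u t * f t := by
  have hsub01 : Ioo p q ⊆ Ioo 0 1 := Ioo_subset_Ioo hp.1.1 hq.1.2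
  have hI : IntegrableOn (fun t => u t * f t - u (poolMean f Q t) * f t) (Ioo p q) := by
    rw [← intervalIntegrable_iff_integrableOn_Ioo_of_le hpq]
    exact (h.iiu hp.1 hq.1).sub (h.M_ii hQ h.ucont hp.1 hq.1)
  have a1 := comp_nonneg hQ hp hq hpq hI (fun t ht htQ => by simp [poolMean, htQ])
    (fun x hx hxQ => by
      have c1 := (cut_inf hQ hxQ (hsub01 hx)).1
      have c2 := (cut_sup hQ hxQ (hsub01 hx)).1
      rw [intervalIntegral.integral_sub (h.iiu c1 c2) (h.M_ii hQ h.ucont c1 c2),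
        h.comp_val hQ hxQ (hsub01 hx)]
      obtain ⟨h1, h2, h3, -⟩ := comp_facts hQ hxQ (hsub01 hx)
      have l1 := cut_le_inf hQ hp hxQ (hsub01 hx) hx.1.le
      have l2 := sup_le_cut hQ hq hxQ (hsub01 hx) hx.2.le
      have := h.pool_le_reveal (hL.trans l1) (h2.trans h3).le (l2.trans hH)
      linarith)
  rw [intervalIntegral.integral_sub (h.iiu hp.1 hq.1) (h.M_ii hQ h.ucont hp.1 hq.1)] at a1
  linarith

theorem Hyp.cuts (h : Hyp f u u' θL θH) (hQ : IsPoolingSet Q) {t : ℝ} (ht : t ∈ Ioo (0:ℝ) 1) :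
    ∃ a c, Cut Q a ∧ Cut Q c ∧ a ≤ t ∧ t ≤ c ∧
      (∫ s in a..c, u (poolMean f Q s) * f s) = pool f u a c ∧
      ((a = t ∧ c = t) ∨ (a < t ∧ t < c ∧ Ioo a c ⊆ Q)) := by
  by_cases hx : t ∈ Q
  · obtain ⟨h1, h2, h3, h4, h5, -⟩ := comp_facts hQ hx ht
    exact ⟨_, _, cut_inf hQ hx ht, cut_sup hQ hx ht, h2.le, h3.le, h.comp_val hQ hx ht u,
      Or.inr ⟨h2, h3, h5⟩⟩
  · have hc : Cut Q t := ⟨⟨ht.1.le, ht.2.le⟩, fun h => absurd h hx⟩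
    exact ⟨t, t, hc, hc, le_rfl, le_rfl, by simp [pool_self], Or.inl ⟨rfl, rfl⟩⟩

theorem Hyp.Q_le (h : Hyp f u u' θL θH)
    {v : ℝ} (hv : ∀ z ∈ Icc (0:ℝ) 1, pool f u 0 z + pool f u z 1 ≤ v)
    (hR : ∀ a b, θL ≤ a → a ≤ b → b ≤ θH →
      pool f u 0 a + (∫ t in a..b, u t * f t) + pool f u b 1 ≤ v)
    (hQ : IsPoolingSet Q) : poolValue f u Q ≤ v := by
  have hL := h.L0
  have hH := h.H1
  have hLH := h.LH
  have ii := fun {x y : ℝ} (hx : x ∈ Icc (0:ℝ) 1) (hy : y ∈ Icc (0:ℝ) 1) =>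
    h.M_ii hQ h.ucont hx hy
  have low : ∀ a, Cut Q a → a ≤ θL → (∫ t in 0..a, u (poolMean f Q t) * f t) ≤ pool f u 0 a :=
    fun a ha haL => h.conc_piece hQ cut0 ha ha.1.1 (fun x hx y hy =>
      h.le1 ⟨hx.1, hx.2.trans haL⟩ ⟨hy.1, hy.2.trans haL⟩)
  have high : ∀ b, Cut Q b → θH ≤ b → (∫ t in b..1, u (poolMean f Q t) * f t) ≤ pool f u b 1 :=
    fun b hb hbH => h.conc_piece hQ hb cut1 hb.1.2 (fun x hx y hy =>
      h.le2 ⟨hbH.trans hx.1, hx.2⟩ ⟨hbH.trans hy.1, hy.2⟩)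
  obtain ⟨a, c, ca, cc, h1, h2, h3, h4⟩ := h.cuts hQ (t := θL) ⟨hL, by linarith⟩
  unfold poolValue
  rcases lt_or_ge θH c with hc | hc
  · have e1 := intervalIntegral.integral_add_adjacent_intervals (ii (cut0 (Q := Q)).1 ca.1) (ii ca.1 cc.1)
    have e2 := intervalIntegral.integral_add_adjacent_intervals (ii (cut0 (Q := Q)).1 cc.1) (ii cc.1 (cut1 (Q := Q)).1)
    have := h.W_le hv hR ca.1.1 (h1.trans h2) cc.1.2
    linarith [low a ca h1, high c cc hc.le]
  · obtain ⟨d, b, cd, cb, k1, k2, k3, k4⟩ := h.cuts hQ (t := θH) ⟨by linarith, hH⟩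
    have hcd : c ≤ d := by
      rcases k4 with k4 | k4
      · linarith [k4.1]
      · by_contra hcon
        push Not at hcon
        rcases cc.2 (k4.2.2 ⟨hcon, by linarith⟩) with e | e
        · linarith
        · linarith
    obtain ⟨a', ha', l1⟩ := h.lowerR ca.1.1 (h1.trans h2) h2 hc
    obtain ⟨b', hb', l2⟩ := h.upperR cb.1.2 (k1.trans k2) (h2.trans hcd) k1
    have l3 := h.conv_piece hQ cc cd hcd h2 k1
    have l4 := hR a' b' ha'.1 (ha'.2.trans (hcd.trans hb'.1)) hb'.2
    have ia' : a' ∈ Icc (0:ℝ) 1 := ⟨by linarith [ha'.1], by linarith [ha'.2]⟩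
    have ib' : b' ∈ Icc (0:ℝ) 1 := ⟨by linarith [hb'.1, cd.1.1], by linarith [hb'.2]⟩
    have e1 := intervalIntegral.integral_add_adjacent_intervals (ii (cut0 (Q := Q)).1 ca.1) (ii ca.1 cc.1)
    have e2 := intervalIntegral.integral_add_adjacent_intervals (ii (cut0 (Q := Q)).1 cc.1) (ii cc.1 cd.1)
    have e3 := intervalIntegral.integral_add_adjacent_intervals (ii (cut0 (Q := Q)).1 cd.1) (ii cd.1 cb.1)
    have e4 := intervalIntegral.integral_add_adjacent_intervals (ii (cut0 (Q := Q)).1 cb.1) (ii cb.1 (cut1 (Q := Q)).1)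
    have g1 := intervalIntegral.integral_add_adjacent_intervals (h.iiu ia' cc.1) (h.iiu cc.1 cd.1)
    have g2 := intervalIntegral.integral_add_adjacent_intervals (h.iiu ia' cd.1) (h.iiu cd.1 ib')
    linarith [low a ca h1, high b cb k2]

theorem split_isPool {z : ℝ} (hz : z ∈ Ioo (0:ℝ) 1) : IsPoolingSet (Ico (0:ℝ) z ∪ Ioc z 1) := by
  refine ⟨{z}ᶜ, isOpen_compl_singleton, ?_⟩
  ext t
  simp only [mem_union, mem_Ico, mem_Ioc, mem_inter_iff, mem_compl_iff, mem_singleton_iff, mem_Icc]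
  constructor
  · rintro (⟨h1, h2⟩ | ⟨h1, h2⟩)
    · exact ⟨h2.ne, h1, by linarith [hz.2]⟩
    · exact ⟨h1.ne', by linarith [hz.1], h2⟩
  · rintro ⟨h1, h2, h3⟩
    rcases lt_or_gt_of_ne h1 with h | h
    · exact Or.inl ⟨h2, h⟩
    · exact Or.inr ⟨h, h3⟩

theorem Hyp.split_val (h : Hyp f u u' θL θH) {z : ℝ} (hz : z ∈ Ioo (0:ℝ) 1) :
    poolValue f u (Ico (0:ℝ) z ∪ Ioc z 1) = pool f u 0 z + pool f u z 1 := by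
  have hQ := split_isPool hz
  set Q := Ico (0:ℝ) z ∪ Ioc z 1 with hQdef
  have hzQ : z ∉ Q := by simp [hQdef]
  have cz : Cut Q z := ⟨⟨hz.1.le, hz.2.le⟩, fun h => absurd h hzQ⟩
  have hx1 : z / 2 ∈ Q := Or.inl ⟨by linarith [hz.1], by linarith [hz.1]⟩
  have hx2 : (z + 1) / 2 ∈ Q := Or.inr ⟨by linarith [hz.2], by linarith [hz.2]⟩
  have i1 : z / 2 ∈ Ioo (0:ℝ) 1 := ⟨by linarith [hz.1], by linarith [hz.2]⟩
  have i2 : (z + 1) / 2 ∈ Ioo (0:ℝ) 1 := ⟨by linarith [hz.1], by linarith [hz.2]⟩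
  have v1 := h.comp_val hQ hx1 i1 u
  have v2 := h.comp_val hQ hx2 i2 u
  obtain ⟨a1, a2, a3, a4, a5, a6, a7, a8⟩ := comp_facts hQ hx1 i1
  obtain ⟨b1, b2, b3, b4, b5, b6, b7, b8⟩ := comp_facts hQ hx2 i2
  have c1 := sup_le_cut hQ cz hx1 i1 (by linarith [hz.1])
  have c2 := cut_le_inf hQ cz hx2 i2 (by linarith [hz.2])
  have e1 : compInf Q (z / 2) = 0 := a7 (Or.inl ⟨a1, by linarith [hz.1]⟩)
  have e2 : compSup Q (z / 2) = z := by
    by_contra hne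
    have := a8 (Or.inl ⟨by linarith [hz.1], lt_of_le_of_ne c1 hne⟩)
    linarith [hz.2]
  have e3 : compSup Q ((z + 1) / 2) = 1 := b8 (Or.inr ⟨by linarith [hz.2], b4⟩)
  have e4 : compInf Q ((z + 1) / 2) = z := by
    by_contra hne
    have := b7 (Or.inr ⟨lt_of_le_of_ne c2 (Ne.symm hne), by linarith [hz.2]⟩)
    linarith [hz.1]
  rw [e1, e2] at v1
  rw [e3, e4] at v2
  unfold poolValue
  rw [← v1, ← v2]
  exact (intervalIntegral.integral_add_adjacent_intervals (h.M_ii hQ h.ucont (cut0 (Q := Q)).1 cz.1)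
    (h.M_ii hQ h.ucont cz.1 (cut1 (Q := Q)).1)).symm

end


theorem C1AC.diff {u u' u'' : ℝ → ℝ} (hu : C1AC u u' u'') {x y : ℝ} (hx : x ∈ Icc (0:ℝ) 1)
    (hy : y ∈ Icc (0:ℝ) 1) :
    IntervalIntegrable u'' volume x y ∧ u' y - u' x = ∫ t in x..y, u'' t := by
  obtain ⟨_, _, hi, hF⟩ := hu
  have i0 : (0:ℝ) ∈ Icc (0:ℝ) 1 := ⟨le_rfl, zero_le_one⟩
  have ii : ∀ {x y : ℝ}, x ∈ Icc (0:ℝ) 1 → y ∈ Icc (0:ℝ) 1 → IntervalIntegrable u'' volume x y := by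
    intro x y hx hy
    have : IntervalIntegrable u'' volume 0 1 := by
      rw [intervalIntegrable_iff_integrableOn_Icc_of_le zero_le_one]; exact hi
    apply this.mono_set
    rw [uIcc_of_le (zero_le_one' ℝ)]
    exact uIcc_subset_Icc hx hy
  refine ⟨ii hx hy, ?_⟩
  have := intervalIntegral.integral_add_adjacent_intervals (ii i0 hx) (ii hx hy)
  rw [hF x hx, hF y hy]
  linarith

theorem C1AC.anti {u u' u'' : ℝ → ℝ} (hu : C1AC u u' u'') {p q : ℝ} (hp : 0 ≤ p) (hq : q ≤ 1)
    (hs : ∀ t ∈ Ioo p q, u'' t < 0) : StrictAntiOn u' (Icc p q) := by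
  intro x hx y hy hxy
  obtain ⟨h1, h2⟩ := hu.diff (x := x) (y := y) ⟨by linarith [hx.1], by linarith [hx.2]⟩
    ⟨by linarith [hy.1], by linarith [hy.2]⟩
  have h3 : 0 < ∫ t in x..y, - u'' t := by
    apply intervalIntegral.intervalIntegral_pos_of_pos_on h1.neg _ hxy
    intro t ht
    have := hs t ⟨by linarith [hx.1, ht.1], by linarith [hy.2, ht.2]⟩
    simpa using this
  rw [intervalIntegral.integral_neg] at h3
  linarith

theorem C1AC.mono {u u' u'' : ℝ → ℝ} (hu : C1AC u u' u'') {p q : ℝ} (hp : 0 ≤ p) (hq : q ≤ 1)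
    (hs : ∀ t ∈ Ioo p q, 0 < u'' t) : StrictMonoOn u' (Icc p q) := by
  intro x hx y hy hxy
  obtain ⟨h1, h2⟩ := hu.diff (x := x) (y := y) ⟨by linarith [hx.1], by linarith [hx.2]⟩
    ⟨by linarith [hy.1], by linarith [hy.2]⟩
  have h3 : 0 < ∫ t in x..y, u'' t := by
    apply intervalIntegral.intervalIntegral_pos_of_pos_on h1 _ hxy
    intro t ht
    exact hs t ⟨by linarith [hx.1, ht.1], by linarith [hy.2, ht.2]⟩
  linarith

theorem Hyp.pool01 {f u u' : ℝ → ℝ} {θL θH : ℝ} (h : Hyp f u u' θL θH) :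
    pool f u 0 1 = u (∫ t in (0:ℝ)..1, t * f t) := by
  simp [pool, condMean, h.fone]

theorem Hyp.pool2 {f u u' : ℝ → ℝ} {θL θH : ℝ} (h : Hyp f u u' θL θH) {z : ℝ}
    (hz : z ∈ Icc (0:ℝ) 1) :
    u (condMean f 0 z) * cdfF f z + u (condMean f z 1) * (1 - cdfF f z)
      = pool f u 0 z + pool f u z 1 := by
  have := h.mass_add (x := 0) (y := z) (z := 1) ⟨le_rfl, zero_le_one⟩ hz ⟨zero_le_one, le_rfl⟩
  rw [h.fone] at this
  unfold pool cdfF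
  rw [show 1 - (∫ t in (0:ℝ)..z, f t) = ∫ t in z..1, f t by linarith]; ring


/-- two inflection points, no two-sided tangency pair exists; if
some `θ_*^M ∈ (0,1)` satisfies the common-tangent condition and dominates the
uninformed payoff, then for some such `θ_*^M` the pooling set
`[0,θ_*^M) ∪ (θ_*^M,1]` is optimal; moreover `m^L ∈ (0,θ^L)` and
`m^H ∈ (θ^H,1)` for this `θ_*^M`. -/
theorem split_pooling_optimal (f : ℝ → ℝ) (hf : IsDensity f)
    (u u' u'' : ℝ → ℝ) (hu : C1AC u u' u'')
    (θL θH : ℝ) (hθL : θL ∈ Ioo (0:ℝ) 1) (hθH : θH ∈ Ioo (0:ℝ) 1) (hLH : θL < θH)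
    (hneg1 : ∀ θ ∈ Ico (0:ℝ) θL, u'' θ < 0)
    (hpos : ∀ θ ∈ Ioo θL θH, 0 < u'' θ)
    (hneg2 : ∀ θ ∈ Ioc θH (1:ℝ), u'' θ < 0)
    (hnopair : ¬ ∃ x ∈ Ioo θL θH, ∃ y ∈ Ioo θL θH, x < y ∧
      u (condMean f 0 x) + u' (condMean f 0 x) * (x - condMean f 0 x) = u x ∧
      u (condMean f y 1) + u' (condMean f y 1) * (y - condMean f y 1) = u y)
    (hM : ∃ z ∈ Ioo (0:ℝ) 1,
      u (condMean f 0 z) + u' (condMean f 0 z) * (z - condMean f 0 z)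
        = u (condMean f z 1) + u' (condMean f z 1) * (z - condMean f z 1) ∧
      u (∫ t in (0:ℝ)..1, t * f t) ≤
        u (condMean f 0 z) * cdfF f z + u (condMean f z 1) * (1 - cdfF f z)) :
    ∃ z ∈ Ioo (0:ℝ) 1,
      (u (condMean f 0 z) + u' (condMean f 0 z) * (z - condMean f 0 z)
        = u (condMean f z 1) + u' (condMean f z 1) * (z - condMean f z 1)) ∧
      (u (∫ t in (0:ℝ)..1, t * f t) ≤
        u (condMean f 0 z) * cdfF f z + u (condMean f z 1) * (1 - cdfF f z)) ∧
      IsOptimal f u (Ico (0:ℝ) z ∪ Ioc z 1) ∧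
      condMean f 0 z ∈ Ioo 0 θL ∧ condMean f z 1 ∈ Ioo θH 1 := by
  have i0 : (0:ℝ) ∈ Icc (0:ℝ) 1 := ⟨le_rfl, zero_le_one⟩
  have i1 : (1:ℝ) ∈ Icc (0:ℝ) 1 := ⟨zero_le_one, le_rfl⟩
  have h : Hyp f u u' θL θH :=
    { fpos := hf.1, fint := hf.2.1, fone := hf.2.2, du := hu.1, L0 := hθL.1, LH := hLH
      H1 := hθH.2
      anti1 := hu.anti le_rfl hθL.2.le (fun t ht => hneg1 t ⟨ht.1.le, ht.2⟩)
      mono := hu.mono hθL.1.le hθH.2.le hpos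
      anti2 := hu.anti hθH.1.le le_rfl (fun t ht => hneg2 t ⟨ht.1, ht.2.le⟩) }
  have hcont : ContinuousOn (fun z => pool f u 0 z + pool f u z 1) (Icc 0 1) :=
    (h.pool_cont i0).add (h.pool_cont' i1)
  have hmax : ∃ z ∈ Ioo (0:ℝ) 1, ∀ t ∈ Icc (0:ℝ) 1,
      pool f u 0 t + pool f u t 1 ≤ pool f u 0 z + pool f u z 1 := by
    obtain ⟨z0, hz0, hm⟩ := isCompact_Icc.exists_isMaxOn ⟨0, i0⟩ hcont
    have hm' : ∀ t ∈ Icc (0:ℝ) 1,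
      pool f u 0 t + pool f u t 1 ≤ pool f u 0 z0 + pool f u z0 1 := fun t ht => hm ht
    by_cases hI : z0 ∈ Ioo (0:ℝ) 1
    · exact ⟨z0, hI, hm'⟩
    · have hE : pool f u 0 z0 + pool f u z0 1 = pool f u 0 1 := by
        have : z0 = 0 ∨ z0 = 1 := by
          by_contra hc
          push Not at hc
          exact hI ⟨lt_of_le_of_ne hz0.1 (Ne.symm hc.1), lt_of_le_of_ne hz0.2 hc.2⟩
        rcases this with rfl | rfl
        · rw [pool_self, zero_add]
        · rw [pool_self, add_zero]
      obtain ⟨z, hz, _, h2⟩ := hM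
      rw [h.pool2 ⟨hz.1.le, hz.2.le⟩, ← h.pool01] at h2
      exact ⟨z, hz, fun t ht => by linarith [hm' t ht]⟩
  obtain ⟨z, hz, hv⟩ := hmax
  have hzI : z ∈ Icc (0:ℝ) 1 := ⟨hz.1.le, hz.2.le⟩
  have hE : pool f u 0 1 ≤ pool f u 0 z + pool f u z 1 := by
    have := hv 0 i0
    rwa [pool_self, zero_add] at this
  have hfd := (h.fd_pool i0 hz hz.1.ne).add (h.fd_pool' i1 hz hz.2.ne')
  have d1 := h.fd_right hz.1.le hz.2 le_rfl hfd
    (fun t ht => hv t ⟨by linarith [ht.1, hz.1], ht.2⟩)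
  have d2 := h.fd_left le_rfl hz.1 hz.2.le hfd
    (fun t ht => hv t ⟨ht.1, by linarith [ht.2, hz.2]⟩)
  have hfoc : u (condMean f 0 z) + u' (condMean f 0 z) * (z - condMean f 0 z)
      = u (condMean f z 1) + u' (condMean f z 1) * (z - condMean f z 1) := by linarith
  have hR : ∀ a b, θL ≤ a → a ≤ b → b ≤ θH →
      pool f u 0 a + (∫ t in a..b, u t * f t) + pool f u b 1 ≤ pool f u 0 z + pool f u z 1 :=
    fun a b ha hab hb => h.R_le hnopair hv ha hab hb
  refine ⟨z, hz, hfoc, ?_, ⟨split_isPool hz, fun Q hQ => ?_⟩,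
    ⟨(h.cm_mem le_rfl hz.1 hz.2.le).1, ?_⟩, ?_, (h.cm_mem hz.1.le hz.2 le_rfl).2⟩
  · rw [h.pool2 hzI, ← h.pool01]; exact hE
  · rw [h.split_val hz]
    exact h.Q_le hv hR hQ
  · refine h.locL hz hfoc hE (fun hzH a ha => ?_)
    linarith [hR a z ha.1 ha.2 hzH]
  · refine h.loc hz hfoc hE (fun hzL b hb => ?_)
    linarith [hR z b hzL hb.1 hb.2]
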